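/- Under the standing assumptions, for all x ∈ X and s > 0, the 2-dimensional Hausdorff measure in the metric q of the ball B_q(x,s) satisfies H²_q(B_q(x,s)) ≤ 2π C_S² C_D⁴ C_W² s², where C_S = 16 C_W C_D^{28+16⌈log₂ λ⌉} and H²_q is normalized so that it coincides with Lebesgue measure when q is the Euclidean metric on ℝ². -/

import Mathlib

open Metric MeasureTheory Set Filter Topology UniformSpace ENNReal
open scoped NNReal

noncomputable section

/-- The set `B_{xy} = B(x, d(x,y)) ∪ B(y, d(x,y))`. -/
def pairBall {X : Type*} [MetricSpace X] (x y : X) : Set X :=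
  Metric.ball x (dist x y) ∪ Metric.ball y (dist x y)

/-- A `δ`-chain from `x` to `y`: a finite sequence `z 0 = x, …, z m = y` with
consecutive distances at most `δ`. -/
def IsDeltaChain {X : Type*} [MetricSpace X] (δ : ℝ) (x y : X) (z : ℕ → X) (m : ℕ) : Prop :=
  z 0 = x ∧ z m = y ∧ ∀ j < m, dist (z j) (z (j + 1)) ≤ δ

/-- `q^δ_{μ,s}(x,y)`: infimum of `∑ μ(B_{x_j x_{j-1}})^{1/s}` over `δ`-chains from `x` to `y`. -/
def qDelta {X : Type*} [MetricSpace X] [MeasurableSpace X]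
    (μ : Measure X) (s δ : ℝ) (x y : X) : ℝ≥0∞ :=
  ⨅ (m : ℕ) (z : ℕ → X) (_ : IsDeltaChain δ x y z m),
    ∑ j ∈ Finset.range m, μ (pairBall (z j) (z (j + 1))) ^ (1 / s)

/-- `q_{μ,s}(x,y) = limsup_{δ → 0⁺} q^δ_{μ,s}(x,y)`. -/
def qmu {X : Type*} [MetricSpace X] [MeasurableSpace X]
    (μ : Measure X) (s : ℝ) (x y : X) : ℝ≥0∞ :=
  Filter.limsup (fun δ => qDelta μ s δ x y) (nhdsWithin (0 : ℝ) (Set.Ioi 0))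

/-- `μ` is a doubling measure with constant `CD`: balls have positive finite measure and
`μ(B(x,2r)) ≤ CD · μ(B(x,r))`. -/
def IsDoublingWith {X : Type*} [MetricSpace X] [MeasurableSpace X]
    (μ : Measure X) (CD : ℝ≥0) : Prop :=
  (∀ (x : X) (r : ℝ), 0 < r → 0 < μ (Metric.ball x r) ∧ μ (Metric.ball x r) < ⊤) ∧
    ∀ (x : X) (r : ℝ), 0 < r → μ (Metric.ball x (2 * r)) ≤ CD * μ (Metric.ball x r)

/-- `μ` is a `CW`-weak metric doubling measure of dimension `s`:
`μ(B_{xy})^{1/s} ≤ CW · q_{μ,s}(x,y)` for all `x, y`. -/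
def IsWMDM {X : Type*} [MetricSpace X] [MeasurableSpace X]
    (μ : Measure X) (s : ℝ) (CW : ℝ≥0) : Prop :=
  ∀ x y : X, μ (pairBall x y) ^ (1 / s) ≤ CW * qmu μ s x y

/-- A continuum is a compact connected set. -/
def IsContinuum {X : Type*} [TopologicalSpace X] (K : Set X) : Prop :=
  IsCompact K ∧ IsConnected K

/-- `X` is `λ`-linearly locally connected. -/
def IsLLC (X : Type*) [MetricSpace X] (lam : ℝ) : Prop :=
  ∀ (x : X) (r : ℝ), 0 < r →
    (∀ y ∈ Metric.ball x r, ∀ z ∈ Metric.ball x r,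
      ∃ K : Set X, IsContinuum K ∧ K ⊆ Metric.ball x (lam * r) ∧ y ∈ K ∧ z ∈ K) ∧
    (∀ y z : X, y ∉ Metric.ball x r → z ∉ Metric.ball x r →
      ∃ K : Set X, IsContinuum K ∧ K ⊆ (Metric.ball x (r / lam))ᶜ ∧ y ∈ K ∧ z ∈ K)

/-- The sphere `S²`, with the metric inherited from `ℝ³`. -/
abbrev Sphere2 : Set (EuclideanSpace ℝ (Fin 3)) := Metric.sphere 0 1

/-- A circle domain in `S²`: an open connected set each of whose complementary
connected components is a point or a round closed disk (a closed metric ball). -/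
def IsCircleDomainS2 (Ω : Set ↥Sphere2) : Prop :=
  IsOpen Ω ∧ IsConnected Ω ∧ ∀ p ∈ Ωᶜ,
    connectedComponentIn Ωᶜ p = {p} ∨
      ∃ (c : ↥Sphere2) (ρ : ℝ), 0 < ρ ∧ connectedComponentIn Ωᶜ p = Metric.closedBall c ρ

/-- A circle domain in the plane. -/
def IsCircleDomainC (Ω : Set ℂ) : Prop :=
  IsOpen Ω ∧ IsConnected Ω ∧ ∀ p ∈ Ωᶜ,
    connectedComponentIn Ωᶜ p = {p} ∨
      ∃ (c : ℂ) (ρ : ℝ), 0 < ρ ∧ connectedComponentIn Ωᶜ p = Metric.closedBall c ρ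

/-- The residual set `X̄ ∖ X` inside the completion of `X`. -/
def resid (X : Type*) [MetricSpace X] : Set (Completion X) :=
  (Set.range ((↑) : X → Completion X))ᶜ

/-- The collection of connected components of `X̄ ∖ X`. -/
def residComps (X : Type*) [MetricSpace X] : Set (Set (Completion X)) :=
  {C | ∃ p ∈ resid X, C = connectedComponentIn (resid X) p}

/-- Distance between two sets. -/
def setSetDist {Z : Type*} [MetricSpace Z] (A B : Set Z) : ℝ :=
  sInf (Set.image2 dist A B)

/-- `f` is `η`-quasisymmetric, for a homeomorphism `η` of `[0,∞)`. -/
def IsQSWith {X Y : Type*} [MetricSpace X] [MetricSpace Y]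
    (η : ℝ≥0 ≃ₜ ℝ≥0) (f : X → Y) : Prop :=
  ∀ x y z : X, x ≠ z →
    nndist (f x) (f y) ≤ η (nndist x y / nndist x z) * nndist (f x) (f z)

/-- `ℓ = ⌈log₂ λ⌉`. -/
def ellOf (lam : ℝ) : ℕ := (Int.ceil (Real.logb 2 lam)).toNat

/-- The constant `C_S = 16 C_W C_D^{28+16⌈log₂ λ⌉}`. -/
def CSconst (lam : ℝ) (CD CW : ℝ≥0) : ℝ≥0∞ :=
  16 * (CW : ℝ≥0∞) * (CD : ℝ≥0∞) ^ (28 + 16 * ellOf lam)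

/-- `K` separates `A` and `B`: `A` and `B` lie in different components of the complement of `K`. -/
def SeparatesSets {X : Type*} [TopologicalSpace X] (K A B : Set X) : Prop :=
  A ⊆ Kᶜ ∧ B ⊆ Kᶜ ∧
    ∀ p ∈ A, ∀ p' ∈ B, connectedComponentIn Kᶜ p ≠ connectedComponentIn Kᶜ p'

/-- A topological disk: a set homeomorphic to an open disk in the plane. -/
def IsTopDisk {X : Type*} [TopologicalSpace X] (U : Set X) : Prop :=
  Nonempty (↥U ≃ₜ ↥(Metric.ball (0 : ℂ) 1))

/-- Lower line integral `∫_γ ρ ds` over `γ : [a,b] → Y`, as a supremum of lower sums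
over partitions of `[a,b]`. -/
def lowerLineIntegral {Y : Type*} [PseudoEMetricSpace Y]
    (ρ : Y → ℝ≥0∞) (γ : ℝ → Y) (a b : ℝ) : ℝ≥0∞ :=
  ⨆ (n : ℕ) (t : ℕ → ℝ) (_ : t 0 = a) (_ : t n = b) (_ : ∀ j < n, t j ≤ t (j + 1)),
    ∑ j ∈ Finset.range n,
      (⨅ u ∈ Set.Icc (t j) (t (j + 1)), ρ (γ u)) * edist (γ (t j)) (γ (t (j + 1)))

/-- `γ` (with parameter interval `[0,1]`) is locally rectifiable on the open interval `(0,1)`. -/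
def LocRectifiableOn {Y : Type*} [PseudoEMetricSpace Y] (γ : ℝ → Y) : Prop :=
  ∀ c d : ℝ, 0 < c → c ≤ d → d < 1 → eVariationOn γ (Set.Icc c d) < ⊤

/-- The line integral of `ρ` over the open part of `γ`. -/
def openLineIntegral {Y : Type*} [PseudoEMetricSpace Y] (ρ : Y → ℝ≥0∞) (γ : ℝ → Y) : ℝ≥0∞ :=
  ⨆ (c : ℝ) (d : ℝ) (_ : 0 < c) (_ : c ≤ d) (_ : d < 1), lowerLineIntegral ρ γ c d

/-- `ρ` is admissible for the path family `Γ`. -/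
def IsAdmissible {Y : Type*} [PseudoEMetricSpace Y] (Γ : Set (ℝ → Y)) (ρ : Y → ℝ≥0∞) : Prop :=
  ∀ γ ∈ Γ, LocRectifiableOn γ → 1 ≤ openLineIntegral ρ γ

def borelSpaceBorel (Y : Type*) [TopologicalSpace Y] : @BorelSpace Y _ (borel Y) :=
  @BorelSpace.mk Y _ (borel Y) rfl

/-- The Hausdorff 2-measure of a metric space, normalized to coincide with Lebesgue measure
in the Euclidean plane. -/
def hausdorff2 (Y : Type*) [EMetricSpace Y] : @Measure Y (borel Y) :=
  ENNReal.ofReal (Real.pi / 4) •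
    @Measure.hausdorffMeasure Y _ (borel Y) (borelSpaceBorel Y) 2

/-- The conformal modulus of a path family in a metric space, with respect to the
(normalized) Hausdorff 2-measure. -/
def modulusH2 {Y : Type*} [EMetricSpace Y] (Γ : Set (ℝ → Y)) : ℝ≥0∞ :=
  ⨅ (ρ : Y → ℝ≥0∞) (_ : @Measurable Y ℝ≥0∞ (borel Y) _ ρ) (_ : IsAdmissible Γ ρ),
    @MeasureTheory.lintegral Y (borel Y) (hausdorff2 Y) fun y => ρ y ^ 2

/-- The conformal modulus of a path family in the plane, with respect to Lebesgue area measure. -/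
def modulusC (Γ : Set (ℝ → ℂ)) : ℝ≥0∞ :=
  ⨅ (ρ : ℂ → ℝ≥0∞) (_ : Measurable ρ) (_ : IsAdmissible Γ ρ), ∫⁻ z, ρ z ^ 2

/-- A homeomorphism between metric spaces is `K`-quasiconformal if it distorts moduli of
path families by a factor of at most `K` in both directions. -/
def IsQCWith {Y Z : Type*} [EMetricSpace Y] [EMetricSpace Z] (K : ℝ≥0∞) (f : Y ≃ₜ Z) : Prop :=
  ∀ Γ : Set (ℝ → Y),
    modulusH2 ((fun γ => (f : Y → Z) ∘ γ) '' Γ) ≤ K * modulusH2 Γ ∧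
      modulusH2 Γ ≤ K * modulusH2 ((fun γ => (f : Y → Z) ∘ γ) '' Γ)

/-- The family `Γ(A,B;G)` of paths joining `A` and `B` in `G` (parameter interval `[0,1]`). -/
def joinPaths (A B G : Set ℂ) : Set (ℝ → ℂ) :=
  {γ | ContinuousOn γ (Set.Icc 0 1) ∧ γ 0 ∈ A ∧ γ 1 ∈ B ∧
    γ 0 ∈ closure G ∧ γ 1 ∈ closure G ∧ ∀ u ∈ Set.Ioo (0 : ℝ) 1, γ u ∈ G}

/-- The constant `α = 2^{−2−2M−π²C_W²C_D^{1+log₂ C_X}/(8 log 2)}`. -/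
def alphaConst (M : ℕ) (CD CW : ℝ≥0) (CX : ℝ) : ℝ :=
  (2 : ℝ) ^ (-2 - 2 * (M : ℝ) -
    Real.pi ^ 2 * (CW : ℝ) ^ 2 * (CD : ℝ) ^ ((1 : ℝ) + Real.logb 2 CX) / (8 * Real.log 2))

section

lemma circle_lift {D : Type*} [TopologicalSpace D] [SimplyConnectedSpace D]
    [LocallyPathConnectedSpace D] (f : C(D, Circle)) (d : D) :
    ∃ ψ : C(D, ℝ), ∀ z, Circle.exp (ψ z) = f z := by
  obtain ⟨t, ht⟩ := Circle.exp_surjective (f d)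
  obtain ⟨F, ⟨_, hF⟩, _⟩ := Circle.isCoveringMap_exp.existsUnique_continuousMap_lifts f d t ht
  exact ⟨F, fun z => congrFun hF z⟩

/-- A continuous integer-multiple-of-2π valued function is constant on preconnected sets. -/
lemma const_of_exp_one {D : Type*} [TopologicalSpace D] {C : Set D} (hC : IsPreconnected C)
    {g : D → ℝ} (hg : ContinuousOn g C) (h1 : ∀ z ∈ C, Circle.exp (g z) = 1)
    {p q : D} (hp : p ∈ C) (hq : q ∈ C) : g p = g q := by
  have hint : ∀ z ∈ C, ∃ n : ℤ, g z = n * (2 * Real.pi) := fun z hz => Circle.exp_eq_one.1 (h1 z hz)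
  have himg : IsPreconnected (g '' C) := hC.image g hg
  by_contra hne
  wlog hlt : g p < g q generalizing p q with H
  · exact H hq hp (Ne.symm hne) (lt_of_le_of_ne (not_lt.1 hlt) (Ne.symm hne))
  obtain ⟨n, hn⟩ := hint p hp
  have hpi := Real.pi_pos
  have hsub : Icc (g p) (g q) ⊆ g '' C :=
    himg.Icc_subset (mem_image_of_mem _ hp) (mem_image_of_mem _ hq)
  obtain ⟨m, hm⟩ := hint q hq
  have hnm : n < m := by
    have : (n:ℝ) * (2 * Real.pi) < m * (2 * Real.pi) := by rw [← hn, ← hm]; exact hlt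
    have := lt_of_mul_lt_mul_right this (by positivity)
    exact_mod_cast this
  have hnm' : (n:ℝ) + 1 ≤ m := by exact_mod_cast hnm
  obtain ⟨z, hz, hzv⟩ := hsub (show g p + Real.pi ∈ Icc (g p) (g q) from
    ⟨by linarith, by rw [hn, hm]; nlinarith⟩)
  obtain ⟨k, hk⟩ := hint z hz
  have h3 : (k:ℝ) * (2 * Real.pi) = n * (2 * Real.pi) + Real.pi := by rw [← hk, hzv, hn]
  have h4 : (2 * (k:ℝ) - 2 * n - 1) * Real.pi = 0 := by linarith
  have h5 : 2 * (k:ℝ) - 2 * n - 1 = 0 := by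
    rcases mul_eq_zero.1 h4 with h | h
    · exact h
    · exact absurd h hpi.ne'
  have h6 : 2 * k - 2 * n - 1 = 0 := by exact_mod_cast h5
  omega

/-- Janiszewski's theorem, two closed sets. -/
lemma janiszewski_two {D : Type*} [TopologicalSpace D] [SimplyConnectedSpace D]
    [LocallyPathConnectedSpace D] [NormalSpace D] {S₁ S₂ : Set D}
    (h₁ : IsClosed S₁) (h₂ : IsClosed S₂) (hd : Disjoint S₁ S₂) {p q : D}
    {C₁ C₂ : Set D} (hC₁ : IsPreconnected C₁) (hC₂ : IsPreconnected C₂)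
    (hd₁ : Disjoint C₁ S₁) (hd₂ : Disjoint C₂ S₂)
    (hp₁ : p ∈ C₁) (hq₁ : q ∈ C₁) (hp₂ : p ∈ C₂) (hq₂ : q ∈ C₂) :
    ∃ C : Set D, IsPreconnected C ∧ Disjoint C (S₁ ∪ S₂) ∧ p ∈ C ∧ q ∈ C := by
  classical
  set O : Set D := (S₁ ∪ S₂)ᶜ with hO
  have hOo : IsOpen O := (h₁.union h₂).isOpen_compl
  have hpO : p ∈ O := by
    simp only [hO, mem_compl_iff, mem_union, not_or]
    exact ⟨disjoint_left.1 hd₁ hp₁, disjoint_left.1 hd₂ hp₂⟩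
  have hqO : q ∈ O := by
    simp only [hO, mem_compl_iff, mem_union, not_or]
    exact ⟨disjoint_left.1 hd₁ hq₁, disjoint_left.1 hd₂ hq₂⟩
  set P := connectedComponentIn O p with hP
  have hPo : IsOpen P := hOo.connectedComponentIn
  by_cases hqP : q ∈ P
  · exact ⟨P, isPreconnected_connectedComponentIn,
      disjoint_left.2 fun z hz hz' => (connectedComponentIn_subset O p hz) hz',
      mem_connectedComponentIn hpO, hqP⟩
  exfalso
  set Q := O \ P with hQ
  have hQo : IsOpen Q := by
    have : Q = ⋃ z ∈ Q, connectedComponentIn O z := by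
      ext w
      simp only [mem_iUnion]
      constructor
      · intro hw
        exact ⟨w, hw, mem_connectedComponentIn hw.1⟩
      · rintro ⟨z, hz, hw⟩
        refine ⟨connectedComponentIn_subset _ _ hw, fun hwP => hz.2 ?_⟩
        have e1 := connectedComponentIn_eq hw
        have e2 := connectedComponentIn_eq hwP
        rw [hP, e2, ← e1]
        exact mem_connectedComponentIn hz.1
    rw [this]
    exact isOpen_biUnion fun z _ => hOo.connectedComponentIn
  obtain ⟨φ, hφ1, hφ2, hφ⟩ := exists_continuous_zero_one_of_isClosed h₁ h₂ hd
  -- real functions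
  let χ : D → ℝ := fun z => if z ∈ Q then 1 else 0
  have hχO : ∀ z ∈ O, ContinuousAt χ z := by
    intro z hz
    by_cases hzQ : z ∈ Q
    · have : χ =ᶠ[𝓝 z] fun _ => (1:ℝ) := by
        filter_upwards [hQo.mem_nhds hzQ] with w hw
        simp [χ, hw]
      exact continuousAt_const.congr this.symm
    · have hzP : z ∈ P := by
        by_contra h
        exact hzQ ⟨hz, h⟩
      have : χ =ᶠ[𝓝 z] fun _ => (0:ℝ) := by
        filter_upwards [hPo.mem_nhds hzP] with w hw
        have : w ∉ Q := fun h => h.2 hw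
        simp [χ, this]
      exact continuousAt_const.congr this.symm
  have hχb : ∀ z, |χ z| ≤ 1 := by
    intro z; by_cases h : z ∈ Q <;> simp [χ, h]
  have hprod : ∀ (f : D → ℝ) (z : D), ContinuousAt f z → f z = 0 →
      ContinuousAt (fun w => f w * χ w) z := by
    intro f z hf hz
    unfold ContinuousAt at hf ⊢
    simp only [hz, zero_mul] at hf ⊢
    refine squeeze_zero_norm (a := fun w => |f w|) (fun w => ?_) (by simpa using hf.abs)
    rw [Real.norm_eq_abs, abs_mul]
    exact mul_le_of_le_one_right (abs_nonneg _) (hχb w)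
  let a : D → ℝ := fun z => φ z * χ z
  let b : D → ℝ := fun z => (φ z - 1) * χ z
  have ha : ∀ z ∉ S₂, ContinuousAt a z := by
    intro z hz
    by_cases hz1 : z ∈ S₁
    · exact hprod φ z φ.continuous.continuousAt (hφ1 hz1)
    · exact φ.continuous.continuousAt.mul (hχO z (by simp [hO, hz, hz1]))
  have hb : ∀ z ∉ S₁, ContinuousAt b z := by
    intro z hz
    by_cases hz1 : z ∈ S₂
    · exact hprod (fun z => φ z - 1) z (φ.continuous.continuousAt.sub continuousAt_const)
        (by have := hφ2 hz1; simp only [Pi.one_apply] at this; simp [this])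
    · exact (φ.continuous.continuousAt.sub continuousAt_const).mul
        (hχO z (by simp [hO, hz, hz1]))
  have hab : ∀ z, Circle.exp (2 * Real.pi * a z) = Circle.exp (2 * Real.pi * b z) := by
    intro z
    by_cases h : z ∈ Q
    · simp only [a, b, χ, h, if_true, mul_one]
      have : 2 * Real.pi * φ z = 2 * Real.pi * (φ z - 1) + 2 * Real.pi := by ring
      rw [this, Circle.exp_add, Circle.exp_two_pi, mul_one]
    · simp [a, b, χ, h]
  have hθ : Continuous fun z => Circle.exp (2 * Real.pi * a z) := by
    rw [continuous_iff_continuousAt]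
    intro z
    by_cases hz : z ∈ S₂
    · have hz1 : z ∉ S₁ := disjoint_right.1 hd hz
      have : (fun z => Circle.exp (2 * Real.pi * a z)) = fun z => Circle.exp (2 * Real.pi * b z) :=
        funext hab
      rw [this]
      exact Circle.exp.continuous.continuousAt.comp (continuousAt_const.mul (hb z hz1))
    · exact Circle.exp.continuous.continuousAt.comp (continuousAt_const.mul (ha z hz))
  obtain ⟨ψ, hψ⟩ := circle_lift ⟨_, hθ⟩ p
  simp only [ContinuousMap.coe_mk] at hψ
  have e2 : ψ p - 2 * Real.pi * a p = ψ q - 2 * Real.pi * a q := by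
    refine const_of_exp_one (g := fun z => ψ z - 2 * Real.pi * a z) hC₂ ?_ ?_ hp₂ hq₂
    · intro z hz
      exact (ψ.continuous.continuousAt.sub
        (continuousAt_const.mul (ha z (disjoint_left.1 hd₂ hz)))).continuousWithinAt
    · intro z hz
      rw [Circle.exp_sub, hψ, div_self']
  have e1 : ψ p - 2 * Real.pi * b p = ψ q - 2 * Real.pi * b q := by
    refine const_of_exp_one (g := fun z => ψ z - 2 * Real.pi * b z) hC₁ ?_ ?_ hp₁ hq₁
    · intro z hz
      exact (ψ.continuous.continuousAt.sub
        (continuousAt_const.mul (hb z (disjoint_left.1 hd₁ hz)))).continuousWithinAt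
    · intro z hz
      rw [Circle.exp_sub, hψ, hab, div_self']
  have hpQ : p ∉ Q := fun h => h.2 (mem_connectedComponentIn hpO)
  have hqQ : q ∈ Q := ⟨hqO, hqP⟩
  simp only [a, b, χ, hpQ, hqQ, if_true, if_false] at e1 e2
  nlinarith [Real.pi_pos]

/-- Janiszewski's theorem, finite families. -/
lemma janiszewski {D κ : Type*} [TopologicalSpace D] [SimplyConnectedSpace D]
    [LocallyPathConnectedSpace D] [NormalSpace D] (s : Finset κ) (S : κ → Set D)
    (hS : ∀ k ∈ s, IsClosed (S k)) (hd : ∀ k ∈ s, ∀ l ∈ s, k ≠ l → Disjoint (S k) (S l)) {p q : D}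
    (hC : ∀ k ∈ s, ∃ C : Set D, IsPreconnected C ∧ Disjoint C (S k) ∧ p ∈ C ∧ q ∈ C) :
    ∃ C : Set D, IsPreconnected C ∧ Disjoint C (⋃ k ∈ s, S k) ∧ p ∈ C ∧ q ∈ C := by
  classical
  induction s using Finset.induction_on with
  | empty => exact ⟨univ, isPreconnected_univ, by simp, trivial, trivial⟩
  | insert k s hk ih =>
    obtain ⟨C₂, h1, h2, h3, h4⟩ := ih (fun k hk => hS k (Finset.mem_insert_of_mem hk))
      (fun k hk l hl => hd k (Finset.mem_insert_of_mem hk) l (Finset.mem_insert_of_mem hl))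
      (fun k hk => hC k (Finset.mem_insert_of_mem hk))
    obtain ⟨C₁, g1, g2, g3, g4⟩ := hC k (Finset.mem_insert_self _ _)
    have := janiszewski_two (hS k (Finset.mem_insert_self _ _))
      (s.finite_toSet.isClosed_biUnion (f := S) fun l hl => hS l (Finset.mem_insert_of_mem hl)) (by
        simp only [Finset.mem_coe, disjoint_iUnion_right]
        intro l hl
        exact hd k (Finset.mem_insert_self _ _) l (Finset.mem_insert_of_mem hl)
          (fun h => hk (h ▸ hl))) g1 h1 g2 (by simpa using h2) g3 g4 h3 h4
    simpa [Finset.set_biUnion_insert] using this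
end

section

abbrev E2 := EuclideanSpace ℝ (Fin 2)

lemma ring_preconnected : IsPreconnected ((closedBall (0 : E2) 1)ᶜ) := by
  have hrank : 1 < Module.rank ℝ E2 := by
    rw [← Module.finrank_eq_rank]
    simp
  have hs : IsPreconnected (sphere (0:E2) 1) := isPreconnected_sphere hrank 0 1
  have : (closedBall (0 : E2) 1)ᶜ = (fun p : ℝ × E2 => p.1 • p.2) '' (Ioi (1:ℝ) ×ˢ sphere (0:E2) 1) := by
    ext v
    simp only [mem_compl_iff, mem_closedBall, dist_zero_right, not_le, mem_image, mem_prod, mem_Ioi,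
      mem_sphere, Prod.exists]
    constructor
    · intro h
      refine ⟨‖v‖, ‖v‖⁻¹ • v, ⟨h, ?_⟩, ?_⟩
      · rw [norm_smul, norm_inv, norm_norm, inv_mul_cancel₀ (by positivity)]
      · rw [smul_smul, mul_inv_cancel₀ (by positivity), one_smul]
    · rintro ⟨a, b, ⟨ha, hb⟩, rfl⟩
      rw [norm_smul, hb, mul_one, Real.norm_eq_abs]
      exact lt_of_lt_of_le ha (le_abs_self a)
  rw [this]
  exact (isPreconnected_Ioi.prod hs).image _ (by fun_prop)

lemma ring_aux {X : Type*} [TopologicalSpace X] [T2Space X] {j : E2 → X} (hj : IsOpenEmbedding j)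
    {S K : Set X} (hS : IsClosed S) (hSb : S ⊆ j '' closedBall 0 1) (hK : IsPreconnected K)
    (hKS : Disjoint K S) {p q : E2} (hp : j p ∈ K) (hq : j q ∈ K)
    (hW : Disjoint (connectedComponentIn (j ⁻¹' S)ᶜ p) ((closedBall (0 : E2) 1)ᶜ)) :
    q ∈ connectedComponentIn (j ⁻¹' S)ᶜ p := by
  by_contra hqW
  set O := (j ⁻¹' S)ᶜ with hO
  have hOo : IsOpen O := (hS.preimage hj.continuous).isOpen_compl
  set W := connectedComponentIn O p with hWd
  have hWo : IsOpen W := hOo.connectedComponentIn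
  have hpO : p ∈ O := disjoint_left.1 hKS hp
  have hqO : q ∈ O := disjoint_left.1 hKS hq
  have hWT : IsClosed (W ∪ j ⁻¹' S) := by
    have : (W ∪ j ⁻¹' S)ᶜ = ⋃ z ∈ O \ W, connectedComponentIn O z := by
      ext w
      simp only [mem_iUnion]
      constructor
      · intro hw
        simp only [mem_compl_iff, mem_union, not_or] at hw
        exact ⟨w, ⟨hw.2, hw.1⟩, mem_connectedComponentIn hw.2⟩
      · rintro ⟨z, hz, hw⟩
        simp only [mem_compl_iff, mem_union, not_or]
        refine ⟨fun hwP => hz.2 ?_, connectedComponentIn_subset _ _ hw⟩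
        have e1 := connectedComponentIn_eq hw
        have e2 := connectedComponentIn_eq hwP
        rw [hWd, e2, ← e1]
        exact mem_connectedComponentIn hz.1
    rw [← isOpen_compl_iff, this]
    exact isOpen_biUnion fun z _ => hOo.connectedComponentIn
  have hsub : W ∪ j ⁻¹' S ⊆ closedBall 0 1 := by
    rintro z (hz | hz)
    · by_contra h
      exact disjoint_left.1 hW hz h
    · obtain ⟨y, hy, hyz⟩ := hSb hz
      rwa [← hj.injective hyz]
  have hcomp : IsCompact (W ∪ j ⁻¹' S) := (isCompact_closedBall (0:E2) 1).of_isClosed_subset hWT hsub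
  have hcl : IsClosed (j '' (W ∪ j ⁻¹' S)) := (hcomp.image hj.continuous).isClosed
  have hU : IsOpen (j '' W) := hj.isOpenMap _ hWo
  have := hK (j '' W) (j '' (W ∪ j ⁻¹' S))ᶜ hU hcl.isOpen_compl (by
    intro k hk
    by_cases h : k ∈ j '' (W ∪ j ⁻¹' S)
    · left
      obtain ⟨z, hz | hz, rfl⟩ := h
      · exact mem_image_of_mem _ hz
      · exact absurd hz (disjoint_left.1 hKS hk)
    · exact Or.inr h) ⟨j p, hp, mem_image_of_mem _ (mem_connectedComponentIn hpO)⟩ ⟨j q, hq, by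
      rintro ⟨z, hz, hzq⟩
      rw [hj.injective hzq] at hz
      rcases hz with hz | hz
      · exact hqW hz
      · exact hqO hz⟩
  obtain ⟨k, _, h1, h2⟩ := this
  exact h2 (image_mono subset_union_left h1)

lemma ring_lemma {X : Type*} [TopologicalSpace X] [T2Space X] {j : E2 → X} (hj : IsOpenEmbedding j)
    {S K : Set X} (hS : IsClosed S) (hSb : S ⊆ j '' closedBall 0 1) (hK : IsPreconnected K)
    (hKS : Disjoint K S) {p q : E2} (hp : j p ∈ K) (hq : j q ∈ K) :
    ∃ C : Set E2, IsPreconnected C ∧ Disjoint C (j ⁻¹' S) ∧ p ∈ C ∧ q ∈ C := by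
  set O := (j ⁻¹' S)ᶜ with hO
  have hpO : p ∈ O := disjoint_left.1 hKS hp
  have hqO : q ∈ O := disjoint_left.1 hKS hq
  have hR : (closedBall (0 : E2) 1)ᶜ ⊆ O := by
    intro z hz hzS
    obtain ⟨y, hy, hyz⟩ := hSb hzS
    exact hz (hj.injective hyz ▸ hy)
  have fin : ∀ a b : E2, b ∈ connectedComponentIn O a → a ∈ O →
      ∃ C : Set E2, IsPreconnected C ∧ Disjoint C (j ⁻¹' S) ∧ a ∈ C ∧ b ∈ C := fun a b hb ha =>
    ⟨connectedComponentIn O a, isPreconnected_connectedComponentIn,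
      disjoint_left.2 fun z hz => connectedComponentIn_subset O a hz, mem_connectedComponentIn ha, hb⟩
  by_cases h1 : Disjoint (connectedComponentIn O p) ((closedBall (0 : E2) 1)ᶜ)
  · exact fin p q (ring_aux hj hS hSb hK hKS hp hq h1) hpO
  by_cases h2 : Disjoint (connectedComponentIn O q) ((closedBall (0 : E2) 1)ᶜ)
  · obtain ⟨C, a, b, c, d⟩ := fin q p (ring_aux hj hS hSb hK hKS hq hp h2) hqO
    exact ⟨C, a, b, d, c⟩
  obtain ⟨z, hz, hzR⟩ := not_disjoint_iff.1 h1
  obtain ⟨w, hw, hwR⟩ := not_disjoint_iff.1 h2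
  refine fin p q ?_ hpO
  have e1 := connectedComponentIn_eq hz
  have e2 := connectedComponentIn_eq hw
  have : w ∈ connectedComponentIn O z := ring_preconnected.subset_connectedComponentIn hzR hR hwR
  rw [e1, connectedComponentIn_eq this, ← e2]
  exact mem_connectedComponentIn hqO

/-- graph of a family of sets restricted to `V` -/
def nerve {ι X : Type*} (A : ι → Set X) (V : Set ι) : SimpleGraph ι where
  Adj i k := i ≠ k ∧ i ∈ V ∧ k ∈ V ∧ (A i ∩ A k).Nonempty
  symm := ⟨fun i k h => ⟨h.1.symm, h.2.2.1, h.2.1, by rw [inter_comm]; exact h.2.2.2⟩⟩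
  loopless := ⟨fun i h => h.1 rfl⟩

lemma sep_lemma {X : Type*} [MetricSpace X] {L : ℝ} (hL : 1 ≤ L) (hLLC : IsLLC X L)
    {j : E2 → X} (hj : IsOpenEmbedding j) {x : X} {ρ k Λ : ℝ} (hρ : 0 < ρ) (hk : 0 < k)
    (hkΛ : L * k + ρ ≤ Λ) (hball : closedBall x Λ ⊆ j '' closedBall 0 1)
    {E F : Set X} (hE : IsPreconnected E) (hF : IsPreconnected F) {e₀ e₁ f₀ f₁ : X}
    (he₀ : e₀ ∈ E) (he₁ : e₁ ∈ E) (hf₀ : f₀ ∈ F) (hf₁ : f₁ ∈ F)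
    (he : ρ ≤ dist e₀ e₁) (hf : ρ ≤ dist f₀ f₁) (he₀x : e₀ ∈ ball x k) (hf₀x : f₀ ∈ ball x k)
    {ι : Type*} [Finite ι] (A : ι → Set X) (c : ι → X) {σ : ℝ} (hσ : σ < ρ / (4 * L))
    (hA : ∀ i, IsClosed (A i)) (hAc : ∀ i, A i ⊆ closedBall (c i) σ) (V : Set ι)
    (hVE : ∀ i ∈ V, Disjoint (A i) E) (hVF : ∀ i ∈ V, Disjoint (A i) F)
    (hdiam : ∀ i ∈ V, ∀ i' ∈ V, (nerve A V).Reachable i i' → dist (c i) (c i') < ρ / (4 * L)) :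
    ∃ C : Set X, IsPreconnected C ∧ C ⊆ ball x Λ ∧ (∀ i ∈ V, Disjoint C (A i)) ∧ e₀ ∈ C ∧ f₀ ∈ C := by
  classical
  cases nonempty_fintype ι
  have hL0 : 0 < L := by linarith
  set H := nerve A V with hH
  have h4 : ρ / (4 * L) ≤ ρ / 4 := by
    apply div_le_div_of_nonneg_left hρ.le (by norm_num) (by linarith)
  -- clumps
  let clump : H.ConnectedComponent → Set X := fun q => ⋃ i ∈ {i | i ∈ V ∧ H.connectedComponentMk i = q}, A i
  have hclump_closed : ∀ q, IsClosed (clump q) := fun q =>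
    (Set.toFinite _).isClosed_biUnion fun i _ => hA i
  have hclump_disj : ∀ q q', q ≠ q' → Disjoint (clump q) (clump q') := by
    intro q q' hne
    rw [disjoint_left]
    intro z hz hz'
    simp only [clump, mem_iUnion, mem_setOf_eq, exists_prop] at hz hz'
    obtain ⟨i, ⟨hi, rfl⟩, hzi⟩ := hz
    obtain ⟨i', ⟨hi', rfl⟩, hzi'⟩ := hz'
    apply hne
    rw [SimpleGraph.ConnectedComponent.eq]
    by_cases hii : i = i'
    · subst hii; exact SimpleGraph.Reachable.refl _
    · exact SimpleGraph.Adj.reachable (show H.Adj i i' from ⟨hii, hi, hi', z, hzi, hzi'⟩)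
  have hclump_near : ∀ i ∈ V, clump (H.connectedComponentMk i) ⊆ Metric.ball (c i) (ρ / (2 * L)) := by
    intro i hi z hz
    simp only [clump, mem_iUnion, mem_setOf_eq, exists_prop] at hz
    obtain ⟨i', ⟨hi', hq⟩, hzi'⟩ := hz
    have h1 := hdiam i hi i' hi' (SimpleGraph.ConnectedComponent.eq.1 hq.symm)
    have h2 := hAc i' hzi'
    rw [mem_closedBall] at h2
    rw [mem_ball]
    have h3 : ρ / (2 * L) = ρ / (4 * L) + ρ / (4 * L) := by field_simp; norm_num
    rw [h3]
    calc dist z (c i) ≤ dist z (c i') + dist (c i') (c i) := dist_triangle _ _ _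
      _ < _ := by rw [dist_comm (c i')]; linarith
  let Z : Set X := (ball x Λ)ᶜ
  let S : Option H.ConnectedComponent → Set X := fun o => match o with
    | none => Z ∪ ⋃ q ∈ {q | ¬ Disjoint (clump q) Z}, clump q
    | some q => if Disjoint (clump q) Z then clump q else ∅
  haveI : Finite H.ConnectedComponent := inferInstance
  have hScl : ∀ o, IsClosed (S o) := by
    intro o
    match o with
    | none =>
      exact (isOpen_ball.isClosed_compl).union
        ((Set.toFinite _).isClosed_biUnion fun i _ => hclump_closed i)
    | some q =>
      by_cases h : Disjoint (clump q) Z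
      · simp only [S, h, if_true]; exact hclump_closed q
      · simp only [S, h, if_false]; exact isClosed_empty
  have hnone : ∀ q, Disjoint (S none) (S (some q)) := by
    intro q
    by_cases h : Disjoint (clump q) Z
    · simp only [S, h, if_true]
      rw [disjoint_union_left]
      refine ⟨h.symm, ?_⟩
      simp only [disjoint_iUnion_left]
      intro q' hq'
      refine hclump_disj q' q ?_
      rintro rfl
      exact hq' h
    · simp [S, h]
  have hSd : ∀ o o', o ≠ o' → Disjoint (S o) (S o') := by
    intro o o' hne
    match o, o' with
    | none, none => exact absurd rfl hne
    | none, some q => exact hnone q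
    | some q, none => exact (hnone q).symm
    | some q, some q' =>
      have hqq : q ≠ q' := fun h => hne (by rw [h])
      have := hclump_disj q q' hqq
      by_cases h : Disjoint (clump q) Z <;> by_cases h' : Disjoint (clump q') Z <;>
        simp [S, h, h', this]
  have hkΛ' : k ≤ Λ := by nlinarith
  obtain ⟨p, -, hp⟩ := hball (ball_subset_closedBall (ball_subset_ball hkΛ' he₀x))
  obtain ⟨q, -, hq⟩ := hball (ball_subset_closedBall (ball_subset_ball hkΛ' hf₀x))
  haveI := Fintype.ofFinite H.ConnectedComponent
  obtain ⟨C, hC, hCS, hpC, hqC⟩ := janiszewski (p := p) (q := q) Finset.univ (fun o => j ⁻¹' (S o))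
    (fun o _ => (hScl o).preimage hj.continuous) (fun o _ o' _ h => (hSd o o' h).preimage j) (by
      intro o _
      match o with
      | none =>
        obtain ⟨K, ⟨-, hK⟩, hKsub, heK, hfK⟩ := (hLLC x k hk).1 e₀ he₀x f₀ hf₀x
        have hKr : K ⊆ range j := fun z hz => image_subset_range _ _
          (hball (ball_subset_closedBall (ball_subset_ball (by linarith) (hKsub hz))))
        refine ⟨j ⁻¹' K, ?_, ?_, by simpa [hp] using heK, by simpa [hq] using hfK⟩
        · rw [← hj.isInducing.isPreconnected_image, image_preimage_eq_of_subset hKr]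
          exact hK.isPreconnected
        · apply Disjoint.preimage
          rw [disjoint_left]
          intro z hz hzS
          have hzx := hKsub hz
          rw [mem_ball] at hzx
          rcases hzS with hzZ | hzS
          · simp only [Z, mem_compl_iff, mem_ball, not_lt] at hzZ
            linarith
          · simp only [mem_iUnion, mem_setOf_eq, exists_prop] at hzS
            obtain ⟨Q, hQZ, hzQ⟩ := hzS
            obtain ⟨y, hyQ, hyZ⟩ := not_disjoint_iff.1 hQZ
            have hzQ' := hzQ
            simp only [clump, mem_iUnion, mem_setOf_eq, exists_prop] at hzQ'
            obtain ⟨i, ⟨hi, rfl⟩, -⟩ := hzQ'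
            have d1 := hclump_near i hi hyQ
            have d2 := hclump_near i hi hzQ
            simp only [Z, mem_compl_iff, mem_ball, not_lt] at hyZ d1 d2
            have h2 : ρ / (2 * L) ≤ ρ / 2 := by
              apply div_le_div_of_nonneg_left hρ.le (by norm_num) (by linarith)
            have := dist_triangle y (c i) x
            have := dist_triangle_left (c i) x z
            rw [dist_comm z (c i)] at d2
            rw [dist_comm z (c i)] at this
            linarith
      | some Q =>
        by_cases hQ : Disjoint (clump Q) Z
        swap
        · exact ⟨univ, isPreconnected_univ, by simp [S, hQ], trivial, trivial⟩
        by_cases hne : (clump Q).Nonempty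
        swap
        · rw [not_nonempty_iff_eq_empty] at hne
          exact ⟨univ, isPreconnected_univ, by simp [S, hne], trivial, trivial⟩
        obtain ⟨z, hz⟩ := hne
        have hz' := hz
        simp only [clump, mem_iUnion, mem_setOf_eq, exists_prop] at hz'
        obtain ⟨i, ⟨hi, rfl⟩, -⟩ := hz'
        have hSq : S (some (H.connectedComponentMk i)) = clump (H.connectedComponentMk i) := by
          simp only [S, hQ, if_true]
        have far : ∀ a b : X, ρ ≤ dist a b → a ∉ Metric.ball (c i) (ρ/2) ∨ b ∉ Metric.ball (c i) (ρ/2) := by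
          intro a b hab
          by_contra hcon
          push Not at hcon
          have h1 := mem_ball.1 hcon.1
          have h2 := mem_ball.1 hcon.2
          have := dist_triangle_right a b (c i)
          linarith
        obtain ⟨e, heE, hec⟩ : ∃ e ∈ E, e ∉ Metric.ball (c i) (ρ/2) := by
          rcases far e₀ e₁ he with h | h
          exacts [⟨e₀, he₀, h⟩, ⟨e₁, he₁, h⟩]
        obtain ⟨f, hfF, hfc⟩ : ∃ e ∈ F, e ∉ Metric.ball (c i) (ρ/2) := by
          rcases far f₀ f₁ hf with h | h
          exacts [⟨f₀, hf₀, h⟩, ⟨f₁, hf₁, h⟩]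
        obtain ⟨K, ⟨-, hK⟩, hKsub, heK, hfK⟩ := (hLLC (c i) (ρ/2) (by linarith)).2 e f hec hfc
        have hEK : IsPreconnected (E ∪ K) := hE.union e heE heK hK.isPreconnected
        have hEKF : IsPreconnected (E ∪ K ∪ F) := hEK.union f (Or.inr hfK) hfF hF
        have hdis : Disjoint (E ∪ K ∪ F) (clump (H.connectedComponentMk i)) := by
          rw [disjoint_left]
          rintro w hw hwQ
          have hwQ' := hwQ
          simp only [clump, mem_iUnion, mem_setOf_eq, exists_prop] at hwQ'
          obtain ⟨i', ⟨hi', -⟩, hwi'⟩ := hwQ'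
          rcases hw with (hw | hw) | hw
          · exact disjoint_left.1 (hVE i' hi') hwi' hw
          · have h1 := hclump_near i hi hwQ
            have h2 := hKsub hw
            rw [mem_compl_iff, div_div] at h2
            exact h2 h1
          · exact disjoint_left.1 (hVF i' hi') hwi' hw
        simp only [hSq]
        refine ring_lemma hj (hclump_closed _) ?_ hEKF hdis (by rw [hp]; exact Or.inl (Or.inl he₀))
          (by rw [hq]; exact Or.inr hf₀)
        intro w hw
        apply hball
        by_contra hcon
        exact disjoint_left.1 hQ hw (fun h => hcon (ball_subset_closedBall h)))
  refine ⟨j '' C, hC.image _ hj.continuous.continuousOn, ?_, ?_, ⟨p, hpC, hp⟩, ⟨q, hqC, hq⟩⟩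
  · rintro _ ⟨y, hy, rfl⟩
    by_contra hcon
    refine disjoint_left.1 hCS hy ?_
    simp only [mem_iUnion]
    exact ⟨none, Finset.mem_univ _, Or.inl hcon⟩
  · intro i hi
    rw [disjoint_left]
    rintro _ ⟨y, hy, rfl⟩ hyA
    refine disjoint_left.1 hCS hy ?_
    simp only [mem_iUnion]
    have hyc : j y ∈ clump (H.connectedComponentMk i) := by
      simp only [clump, mem_iUnion, mem_setOf_eq, exists_prop]
      exact ⟨i, ⟨hi, rfl⟩, hyA⟩
    by_cases hQ : Disjoint (clump (H.connectedComponentMk i)) Z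
    · refine ⟨some (H.connectedComponentMk i), Finset.mem_univ _, ?_⟩
      simp only [S, hQ, if_true]
      exact hyc
    · refine ⟨none, Finset.mem_univ _, Or.inr ?_⟩
      simp only [mem_iUnion, mem_setOf_eq, exists_prop]
      exact ⟨_, hQ, hyc⟩
end

section


lemma pairBall_comm {X : Type*} [MetricSpace X] (x y : X) : pairBall x y = pairBall y x := by
  unfold pairBall; rw [dist_comm, union_comm]

lemma pairBall_subset {X : Type*} [MetricSpace X] {x y a : X} {r : ℝ}
    (h1 : dist x a + dist x y ≤ r) (h2 : dist y a + dist x y ≤ r) :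
    pairBall x y ⊆ Metric.ball a r := by
  unfold pairBall
  exact union_subset (Metric.ball_subset_ball' (by linarith)) (Metric.ball_subset_ball' (by linarith))

section qd
variable {X : Type*} [MetricSpace X] [MeasurableSpace X] {μ : Measure X}

lemma qDelta_self (δ : ℝ) (x : X) : qDelta μ 2 δ x x = 0 := by
  apply le_antisymm _ bot_le
  refine iInf_le_of_le 0 (iInf_le_of_le (fun _ => x) (iInf_le_of_le ⟨rfl, rfl, by simp⟩ (by simp)))

lemma qDelta_step {δ : ℝ} (x : X) {y z : X} (h : dist y z ≤ δ) :
    qDelta μ 2 δ x z ≤ qDelta μ 2 δ x y + μ (pairBall y z) ^ (1 / 2 : ℝ) := by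
  conv_rhs => rw [qDelta]
  simp only [ENNReal.iInf_add]
  refine le_iInf fun m => le_iInf fun c => le_iInf fun hc => ?_
  obtain ⟨h0, h1, h2⟩ := hc
  refine iInf_le_of_le (m+1) (iInf_le_of_le (fun n => if n ≤ m then c n else z)
    (iInf_le_of_le ⟨by simp [h0], by simp, ?_⟩ ?_))
  · intro j hj
    rcases Nat.lt_succ_iff_lt_or_eq.1 hj with hj | rfl
    · simp only [hj.le, if_true, Nat.succ_le_of_lt hj]; exact h2 j hj
    · simpa [h1] using h
  · rw [Finset.sum_range_succ]
    refine add_le_add (Finset.sum_le_sum fun j hj => ?_) ?_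
    · have hj := Finset.mem_range.1 hj
      simp only [hj.le, if_true, Nat.succ_le_of_lt hj]; exact le_rfl
    · simp [h1]

lemma qDelta_one {δ : ℝ} {y z : X} (h : dist y z ≤ δ) :
    qDelta μ 2 δ y z ≤ μ (pairBall y z) ^ (1 / 2 : ℝ) := by
  simpa [qDelta_self] using qDelta_step (μ := μ) y h

lemma qDelta_triangle (δ : ℝ) (x y z : X) :
    qDelta μ 2 δ x z ≤ qDelta μ 2 δ x y + qDelta μ 2 δ y z := by
  conv_rhs => rw [qDelta, qDelta.eq_def μ 2 δ y z, ← qDelta]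
  simp only [ENNReal.add_iInf]
  refine le_iInf fun m => le_iInf fun c => le_iInf fun hc => ?_
  obtain ⟨h0, h1, h2⟩ := hc
  have : ∀ n ≤ m, qDelta μ 2 δ x (c n) ≤ qDelta μ 2 δ x y +
      ∑ j ∈ Finset.range n, μ (pairBall (c j) (c (j + 1))) ^ (1 / 2 : ℝ) := by
    intro n
    induction n with
    | zero => intro _; simp [h0]
    | succ k ih =>
      intro hk
      rw [Finset.sum_range_succ, ← add_assoc]
      exact (qDelta_step x (h2 k hk)).trans (by gcongr; exact ih (by omega))
  have := this m le_rfl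
  rwa [h1] at this

lemma qDelta_symm_le (δ : ℝ) (x y : X) : qDelta μ 2 δ y x ≤ qDelta μ 2 δ x y := by
  conv_rhs => rw [qDelta]
  refine le_iInf fun m => le_iInf fun c => le_iInf fun hc => ?_
  obtain ⟨h0, h1, h2⟩ := hc
  have : ∀ n ≤ m, qDelta μ 2 δ (c n) x ≤
      ∑ j ∈ Finset.range n, μ (pairBall (c j) (c (j + 1))) ^ (1 / 2 : ℝ) := by
    intro n
    induction n with
    | zero => intro _; simp [h0, qDelta_self]
    | succ k ih =>
      intro hk
      rw [Finset.sum_range_succ, add_comm (Finset.sum _ _)]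
      refine (qDelta_triangle δ _ (c k) _).trans (add_le_add ?_ (ih (by omega)))
      rw [pairBall_comm]
      exact qDelta_one (by rw [dist_comm]; exact h2 k hk)
  have := this m le_rfl
  rwa [h1] at this

lemma qDelta_comm (δ : ℝ) (x y : X) : qDelta μ 2 δ x y = qDelta μ 2 δ y x :=
  le_antisymm (qDelta_symm_le _ _ _) (qDelta_symm_le _ _ _)

lemma qDelta_anti {δ δ' : ℝ} (h : δ ≤ δ') (x y : X) : qDelta μ 2 δ' x y ≤ qDelta μ 2 δ x y := by
  unfold qDelta
  refine le_iInf fun m => le_iInf fun c => le_iInf fun hc => ?_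
  exact iInf_le_of_le m (iInf_le_of_le c (iInf_le_of_le
    ⟨hc.1, hc.2.1, fun j hj => (hc.2.2 j hj).trans h⟩ le_rfl))

lemma qmu_le {x y : X} {b : ℝ≥0∞} (h : ∀ δ > 0, qDelta μ 2 δ x y ≤ b) : qmu μ 2 x y ≤ b := by
  unfold qmu
  refine Filter.limsup_le_of_le (h := ?_)
  filter_upwards [self_mem_nhdsWithin] with δ hδ using h δ hδ

lemma qDelta_le_qmu {δ : ℝ} (hδ : 0 < δ) (x y : X) : qDelta μ 2 δ x y ≤ qmu μ 2 x y := by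
  unfold qmu
  refine Filter.le_limsup_of_frequently_le (Filter.Eventually.frequently ?_)
  filter_upwards [Ioc_mem_nhdsGT hδ] with t ht using qDelta_anti ht.2 x y

lemma IsDoublingWith.pow {CD : ℝ≥0} (h : IsDoublingWith μ CD) (n : ℕ) (x : X) {r : ℝ} (hr : 0 < r) :
    μ (Metric.ball x (2 ^ n * r)) ≤ (CD : ℝ≥0∞) ^ n * μ (Metric.ball x r) := by
  induction n with
  | zero => simp
  | succ k ih =>
    have := h.2 x (2 ^ k * r) (by positivity)
    rw [← mul_assoc, ← pow_succ'] at this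
    refine this.trans ?_
    rw [pow_succ' (CD : ℝ≥0∞), mul_assoc]
    gcongr

lemma IsDoublingWith.one_le {CD : ℝ≥0} (h : IsDoublingWith μ CD) (x : X) : (1 : ℝ≥0∞) ≤ CD := by
  have h1 := h.2 x 1 one_pos
  have h2 : μ (Metric.ball x 1) ≤ μ (Metric.ball x (2 * 1)) :=
    measure_mono (Metric.ball_subset_ball (by norm_num))
  have h3 := h.1 x 1 one_pos
  by_contra hc
  push Not at hc
  have : CD * μ (Metric.ball x 1) < 1 * μ (Metric.ball x 1) :=
    (ENNReal.mul_lt_mul_iff_left h3.1.ne' h3.2.ne).2 hc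
  rw [one_mul] at this
  exact absurd (h2.trans h1) (not_le.2 this)

/-- square root of the measure of a ball -/
def gg (μ : Measure X) (x : X) (r : ℝ) : ℝ≥0∞ := μ (Metric.ball x r) ^ (1 / 2 : ℝ)

lemma gg_sq (x : X) (r : ℝ) : gg μ x r ^ 2 = μ (Metric.ball x r) := by
  unfold gg
  rw [← ENNReal.rpow_natCast, ← ENNReal.rpow_mul]; norm_num

lemma sq_rt (a : ℝ≥0∞) : (a ^ 2) ^ (1 / 2 : ℝ) = a := by
  rw [← ENNReal.rpow_natCast, ← ENNReal.rpow_mul]; norm_num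

lemma gg_mono {x y : X} {r s : ℝ} (h : r + dist x y ≤ s) : gg μ x r ≤ gg μ y s := by
  unfold gg; gcongr; exact Metric.ball_subset_ball' h

lemma rt_pair_le {x y a : X} {r : ℝ}
    (h1 : dist x a + dist x y ≤ r) (h2 : dist y a + dist x y ≤ r) :
    μ (pairBall x y) ^ (1 / 2 : ℝ) ≤ gg μ a r := by
  unfold gg; gcongr; exact pairBall_subset h1 h2

lemma IsDoublingWith.gg_pos {CD : ℝ≥0} (h : IsDoublingWith μ CD) (x : X) {r : ℝ} (hr : 0 < r) :
    0 < gg μ x r ∧ gg μ x r < ⊤ :=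
  ⟨ENNReal.rpow_pos (h.1 x r hr).1 (h.1 x r hr).2.ne,
    ENNReal.rpow_lt_top_of_nonneg (by norm_num) (h.1 x r hr).2.ne⟩

lemma IsDoublingWith.gg_pow {CD : ℝ≥0} (h : IsDoublingWith μ CD) (n : ℕ) (x : X) {r : ℝ}
    (hr : 0 < r) : gg μ x (4 ^ n * r) ≤ (CD : ℝ≥0∞) ^ n * gg μ x r := by
  have h1 := h.pow (2 * n) x hr
  rw [← sq_rt ((CD : ℝ≥0∞) ^ n)]
  unfold gg
  rw [← ENNReal.mul_rpow_of_nonneg _ _ (by norm_num), ← pow_mul, mul_comm n 2]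
  rw [pow_mul] at h1; norm_num at h1 ⊢
  gcongr

end qd
end

section


lemma exists_net {X : Type*} [MetricSpace X] (A : Set X) (hA : TotallyBounded A) {ε : ℝ}
    (hε : 0 < ε) : ∃ N : Set X, N.Finite ∧ N ⊆ A ∧ (∀ x ∈ N, ∀ y ∈ N, x ≠ y → ε ≤ dist x y) ∧
      ∀ a ∈ A, ∃ x ∈ N, dist a x < ε := by
  obtain ⟨N, hN⟩ := zorn_subset {S : Set X | S ⊆ A ∧ S.Pairwise (fun x y => ε ≤ dist x y)} (by
    intro c hc hch
    refine ⟨⋃₀ c, ⟨sUnion_subset fun s hs => (hc hs).1, ?_⟩, fun s hs => subset_sUnion_of_mem hs⟩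
    exact (Set.pairwise_sUnion hch.directedOn).2 fun s hs => (hc hs).2)
  have hN1 := hN.prop
  refine ⟨N, ?_, hN1.1, fun x hx y hy hxy => hN1.2 hx hy hxy, ?_⟩
  · obtain ⟨t, ht, hcov⟩ := Metric.totallyBounded_iff.1 hA (ε / 2) (by positivity)
    have : ∀ x : N, ∃ y : t, dist (x : X) y < ε / 2 := by
      intro x
      obtain ⟨y, hy, hxy⟩ := mem_iUnion₂.1 (hcov (hN1.1 x.2))
      exact ⟨⟨y, hy⟩, hxy⟩
    choose f hf using this
    have hinj : Function.Injective f := by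
      intro a b hab
      by_contra hne
      have h1 := hN1.2 a.2 b.2 (fun h => hne (Subtype.ext h))
      have h2 := hf a
      have h3 := hf b
      rw [← hab] at h3
      have := dist_triangle_right (a : X) b (f a)
      simp only at h1
      linarith
    have := ht.to_subtype
    have := Finite.of_injective f hinj
    exact Set.toFinite N
  · intro a ha
    by_contra hcon
    push Not at hcon
    have hins : insert a N ∈ {S : Set X | S ⊆ A ∧ S.Pairwise (fun x y => ε ≤ dist x y)} := by
      refine ⟨insert_subset ha hN1.1, ?_⟩
      refine (Set.pairwise_insert).2 ⟨hN1.2, fun b hb _ => ⟨hcon b hb, ?_⟩⟩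
      rw [dist_comm]; exact hcon b hb
    have := hN.le_of_ge hins (subset_insert a N) (mem_insert a N)
    have h2 := hcon a this
    simp at h2
    linarith

section ms
variable {X : Type*} [MetricSpace X] [MeasurableSpace X] [BorelSpace X] {μ : Measure X} {CD : ℝ≥0}

lemma rev_dbl (h : IsDoublingWith μ CD) {rX : ℝ}
    (hex : ∀ z : X, ∀ s, 0 < s → s ≤ rX → ∃ y, dist z y = s) (x : X) {ρ : ℝ} (hρ : 0 < ρ)
    (h2 : 2 * ρ ≤ rX) :
    ((CD : ℝ≥0∞) ^ 2 + 1) * μ (Metric.ball x ρ) ≤ (CD : ℝ≥0∞) ^ 2 * μ (Metric.ball x (4 * ρ)) := by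
  obtain ⟨y, hy⟩ := hex x (2 * ρ) (by positivity) h2
  have h3 : μ (Metric.ball x ρ) ≤ (CD : ℝ≥0∞) ^ 2 * μ (Metric.ball y ρ) := by
    refine le_trans (measure_mono (Metric.ball_subset_ball' ?_)) (h.pow 2 y hρ)
    linarith
  have h4 : μ (Metric.ball x ρ) + μ (Metric.ball y ρ) ≤ μ (Metric.ball x (4 * ρ)) := by
    rw [← measure_union (Metric.ball_disjoint_ball (by linarith)) measurableSet_ball]
    refine measure_mono (union_subset (Metric.ball_subset_ball (by linarith))
      (Metric.ball_subset_ball' (by rw [dist_comm]; linarith)))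
  calc ((CD : ℝ≥0∞) ^ 2 + 1) * μ (Metric.ball x ρ)
      = (CD : ℝ≥0∞) ^ 2 * μ (Metric.ball x ρ) + μ (Metric.ball x ρ) := by ring
    _ ≤ (CD : ℝ≥0∞) ^ 2 * μ (Metric.ball x ρ) + (CD : ℝ≥0∞) ^ 2 * μ (Metric.ball y ρ) := by gcongr
    _ = (CD : ℝ≥0∞) ^ 2 * (μ (Metric.ball x ρ) + μ (Metric.ball y ρ)) := by ring
    _ ≤ _ := by gcongr

lemma rev_gg (h : IsDoublingWith μ CD) {rX : ℝ}
    (hex : ∀ z : X, ∀ s, 0 < s → s ≤ rX → ∃ y, dist z y = s) (x : X) {ρ : ℝ} (hρ : 0 < ρ)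
    (h2 : 2 * ρ ≤ rX) :
    (4 * (CD : ℝ≥0∞) ^ 2 + 1) * gg μ x ρ ≤ 4 * (CD : ℝ≥0∞) ^ 2 * gg μ x (4 * ρ) := by
  have h1 := rev_dbl h hex x hρ h2
  have hc := h.one_le x
  rw [← sq_rt ((4 * (CD : ℝ≥0∞) ^ 2 + 1) * gg μ x ρ),
    ← sq_rt (4 * (CD : ℝ≥0∞) ^ 2 * gg μ x (4 * ρ))]
  refine ENNReal.rpow_le_rpow ?_ (by norm_num)
  rw [mul_pow, mul_pow, gg_sq, gg_sq]
  have hc2 : (1 : ℝ≥0∞) ≤ (CD : ℝ≥0∞) ^ 2 := one_le_pow₀ hc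
  set c := (CD : ℝ≥0∞) ^ 2
  calc (4 * c + 1) ^ 2 * μ (Metric.ball x ρ)
      = (16 * c * c + 8 * c + 1) * μ (Metric.ball x ρ) := by ring
    _ ≤ (16 * c * c + 8 * c + c) * μ (Metric.ball x ρ) := by gcongr
    _ ≤ (16 * c * c + 8 * c + 8 * c) * μ (Metric.ball x ρ) := by
        gcongr
        nth_rw 1 [← one_mul c]
        gcongr; norm_num
    _ = 16 * c * ((c + 1) * μ (Metric.ball x ρ)) := by ring
    _ ≤ 16 * c * (c * μ (Metric.ball x (4 * ρ))) := by gcongr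
    _ = _ := by ring

lemma CD_big (h : IsDoublingWith μ CD) {rX : ℝ} (hrX : 0 < rX)
    (hex : ∀ z : X, ∀ s, 0 < s → s ≤ rX → ∃ y, dist z y = s) (x : X) :
    (216 : ℝ≥0∞) ≤ 16 * (CD : ℝ≥0∞) ^ 12 := by
  have h1 := rev_dbl h hex x (ρ := rX / 2) (by positivity) (by linarith)
  have h2 := h.pow 2 x (r := rX / 2) (by positivity)
  norm_num only at h2
  have h3 := h.1 x (rX / 2) (by positivity)
  have h4 : ((CD : ℝ≥0∞) ^ 2 + 1) * μ (Metric.ball x (rX / 2)) ≤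
      ((CD : ℝ≥0∞) ^ 2 * (CD : ℝ≥0∞) ^ 2) * μ (Metric.ball x (rX / 2)) := by
    refine h1.trans ?_
    rw [mul_assoc]
    gcongr
  have h5 := (ENNReal.mul_le_mul_iff_left h3.1.ne' h3.2.ne).1 h4
  have h6 : CD ^ 2 + 1 ≤ CD ^ 2 * CD ^ 2 := by exact_mod_cast h5
  have h7 : (CD : ℝ) ^ 2 + 1 ≤ (CD : ℝ) ^ 2 * (CD : ℝ) ^ 2 := by exact_mod_cast h6
  have h8 : (216 : ℝ) ≤ 16 * (CD : ℝ) ^ 12 := by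
    have hc : (0 : ℝ) ≤ (CD : ℝ) ^ 2 := by positivity
    have e : (CD : ℝ) ^ 12 = ((CD : ℝ) ^ 2) ^ 6 := by ring
    rw [e]
    generalize (CD : ℝ) ^ 2 = c at *
    have c1 : (1.4 : ℝ) ≤ c := by nlinarith
    have c3 : (2.7 : ℝ) ≤ c ^ 3 := by nlinarith [mul_le_mul_of_nonneg_left h7 hc]
    have c2 : c ^ 3 ≥ 2 * c + 1 := by nlinarith [mul_le_mul_of_nonneg_left h7 hc]
    have : c ^ 3 ≥ 3.8 := by linarith
    nlinarith [mul_self_nonneg (c^3 - 3.8)]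
  exact_mod_cast h8

lemma small_gg (h : IsDoublingWith μ CD) {rX : ℝ} (hrX : 0 < rX)
    (hex : ∀ z : X, ∀ s, 0 < s → s ≤ rX → ∃ y, dist z y = s) (hfin : μ univ < ⊤)
    {η : ℝ≥0∞} (hη : 0 < η) : ∃ ε > 0, ∀ z : X, gg μ z ε ≤ η := by
  set a : ℝ≥0∞ := 4 * (CD : ℝ≥0∞) ^ 2 with ha
  have hatop : a ≠ ⊤ := by simp [ha, ENNReal.mul_eq_top]
  set θ := a / (a + 1) with hθ
  have hθ1 : θ < 1 := by
    rw [hθ, ENNReal.div_lt_iff (Or.inl (by simp)) (Or.inl (by simp [hatop])), one_mul]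
    exact ENNReal.lt_add_right hatop one_ne_zero
  have step : ∀ z : X, ∀ ρ, 0 < ρ → 2 * ρ ≤ rX → gg μ z ρ ≤ θ * gg μ z (4 * ρ) := by
    intro z ρ h0 h2
    have := rev_gg h hex z h0 h2
    rw [hθ, ENNReal.div_eq_inv_mul, mul_assoc]
    rw [← ENNReal.div_eq_inv_mul, ENNReal.le_div_iff_mul_le (Or.inl (by simp)) (Or.inl (by simp [hatop])), mul_comm]
    exact this
  have it : ∀ n : ℕ, ∀ z : X, gg μ z ((rX / 2) / 4 ^ n) ≤ θ ^ n * μ univ ^ (1 / 2 : ℝ) := by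
    intro n
    induction n with
    | zero => intro z; simp only [pow_zero, one_mul]; unfold gg; gcongr; exact subset_univ _
    | succ k ih =>
      intro z
      have h4 : (1 : ℝ) ≤ 4 ^ k := one_le_pow₀ (by norm_num)
      refine (step z _ (by positivity) ?_).trans ?_
      · rw [pow_succ, div_div, ← mul_div_assoc, div_le_iff₀ (by positivity)]; nlinarith
      · rw [pow_succ' θ, mul_assoc]
        gcongr
        refine le_of_eq_of_le ?_ (ih z)
        congr 1
        rw [pow_succ]; field_simp
  have ht : Tendsto (fun n : ℕ => θ ^ n * μ univ ^ (1 / 2 : ℝ)) atTop (𝓝 0) := by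
    have := ENNReal.Tendsto.mul_const (ENNReal.tendsto_pow_atTop_nhds_zero_of_lt_one hθ1)
      (b := μ univ ^ (1 / 2 : ℝ)) (Or.inr (ENNReal.rpow_lt_top_of_nonneg (by norm_num) hfin.ne).ne)
    simpa using this
  obtain ⟨n, hn⟩ := (ht.eventually (ge_mem_nhds hη)).exists
  exact ⟨(rX / 2) / 4 ^ n, by positivity, fun z => (it n z).trans hn⟩

lemma lowerU {CW : ℝ≥0} (h : IsDoublingWith μ CD) (hw : IsWMDM μ 2 CW)
    (hsm : ∀ η : ℝ≥0∞, 0 < η → ∃ ε > 0, ∀ z : X, gg μ z ε ≤ η) {G : Set X} (hG : IsCompact G)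
    {ρ : ℝ} (hρ : 0 < ρ) : ∃ δ₀ > 0, ∀ p ∈ G, ∀ p' ∈ G, ρ ≤ dist p p' →
      gg μ p (ρ / 2) ≤ 2 * CW * qDelta μ 2 δ₀ p p' := by
  by_contra hcon
  push Not at hcon
  choose P hP P' hP' hd hlt using fun n : ℕ => hcon (1 / ((n : ℝ) + 1)) (by positivity)
  obtain ⟨⟨p, p'⟩, -, φ, hφ, hlim⟩ := (hG.prod hG).tendsto_subseq (x := fun n => (P n, P' n))
    (fun n => ⟨hP n, hP' n⟩)
  have l1 : Tendsto (fun n => P (φ n)) atTop (𝓝 p) := (continuous_fst.tendsto _).comp hlim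
  have l2 : Tendsto (fun n => P' (φ n)) atTop (𝓝 p') := (continuous_snd.tendsto _).comp hlim
  have hpp : ρ ≤ dist p p' := ge_of_tendsto' (l1.dist l2) fun n => hd _
  set g := μ (pairBall p p') ^ (1 / 2 : ℝ) with hg
  have hgpos : 0 < g ∧ g < ⊤ := by
    have hpos := h.gg_pos p (r := dist p p') (by linarith)
    refine ⟨hpos.1.trans_le ?_, ?_⟩
    · unfold gg; rw [hg]; gcongr; exact subset_union_left
    · refine (rt_pair_le (a := p) (r := dist p p' + dist p p') ?_ ?_).trans_lt
        (h.gg_pos p (by linarith)).2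
      · simp
      · rw [dist_comm p' p]
  have hCW : (CW : ℝ≥0∞) ≠ 0 := by
    intro h0
    have := hw p p'
    rw [h0, zero_mul] at this
    exact absurd this (not_le.2 hgpos.1)
  have h2CW : (2 * CW : ℝ≥0∞) ≠ 0 := by simpa using hCW
  have h2CW' : (2 * CW : ℝ≥0∞) ≠ ⊤ := by simp [ENNReal.mul_eq_top]
  have key : qmu μ 2 p p' ≤ g / (2 * CW) := by
    refine qmu_le fun δ hδ => ?_
    refine ENNReal.le_of_forall_pos_le_add fun η hη _ => ?_
    obtain ⟨ε, hε, hsm⟩ := hsm (η / 2) (by simpa using hη.ne')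
    have e1 := Metric.tendsto_nhds.1 l1 (min (min δ (ε / 2)) (ρ / 2)) (by positivity)
    have e2 := Metric.tendsto_nhds.1 l2 (min (min δ (ε / 2)) (ρ / 2)) (by positivity)
    have e3 : ∀ᶠ n in atTop, 1 / (((φ n : ℕ) : ℝ) + 1) < δ :=
      (tendsto_one_div_add_atTop_nhds_zero_nat.comp hφ.tendsto_atTop).eventually (gt_mem_nhds hδ)
    obtain ⟨n, hn1, hn2, hn3⟩ := (e1.and (e2.and e3)).exists
    simp only [lt_min_iff] at hn1 hn2
    have s1 : qDelta μ 2 δ p (P (φ n)) ≤ η / 2 := by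
      refine (qDelta_one (by rw [dist_comm]; linarith)).trans (le_trans ?_ (hsm p))
      refine rt_pair_le ?_ ?_
      · rw [dist_self, dist_comm]; linarith
      · rw [dist_comm p]; linarith
    have s2 : qDelta μ 2 δ (P' (φ n)) p' ≤ η / 2 := by
      refine (qDelta_one (by linarith)).trans (le_trans ?_ (hsm p'))
      refine rt_pair_le ?_ ?_
      · linarith
      · rw [dist_self]; linarith
    have s3 : qDelta μ 2 δ (P (φ n)) (P' (φ n)) ≤ g / (2 * CW) := by
      refine (qDelta_anti hn3.le _ _).trans ?_
      rw [ENNReal.le_div_iff_mul_le (Or.inl h2CW) (Or.inl h2CW'), mul_comm]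
      refine (hlt (φ n)).le.trans ?_
      unfold gg
      rw [hg]; gcongr
      exact (Metric.ball_subset_ball' (by linarith)).trans subset_union_left
    calc qDelta μ 2 δ p p' ≤ qDelta μ 2 δ p (P (φ n)) + qDelta μ 2 δ (P (φ n)) p' :=
          qDelta_triangle _ _ _ _
      _ ≤ qDelta μ 2 δ p (P (φ n)) + (qDelta μ 2 δ (P (φ n)) (P' (φ n)) +
            qDelta μ 2 δ (P' (φ n)) p') := by gcongr; exact qDelta_triangle _ _ _ _
      _ ≤ η / 2 + (g / (2 * CW) + η / 2) := by gcongr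
      _ = g / (2 * CW) + (η / 2 + η / 2) := by ring
      _ = g / (2 * CW) + η := by rw [ENNReal.add_halves]
  have h1 : g ≤ g / 2 := by
    calc g ≤ CW * qmu μ 2 p p' := hw p p'
      _ ≤ CW * (g / (2 * CW)) := by gcongr
      _ = g / 2 := by
        rw [mul_comm (2 : ℝ≥0∞), ← mul_div_assoc, ENNReal.mul_div_mul_left _ _ hCW (by simp)]
  exact absurd h1 (not_le.2 (ENNReal.half_lt_self hgpos.1.ne' hgpos.2.ne))

end ms
end

section


lemma coarea {ι : Type*} [Fintype ι] (v : ι → ℝ) (w : ι → ℝ≥0) {a b : ℝ} {g K : ℝ≥0∞}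
    (h : ∀ t ∈ Ioc a b, g ≤ K * ∑ i, (Ioc (v i - w i) (v i)).indicator (fun _ => (w i : ℝ≥0∞)) t) :
    ENNReal.ofReal (b - a) * g ≤ K * ∑ i, (w i : ℝ≥0∞) ^ 2 := by
  have hm : ∀ i, Measurable ((Ioc (v i - w i) (v i)).indicator (fun _ => (w i : ℝ≥0∞))) :=
    fun i => measurable_const.indicator measurableSet_Ioc
  calc ENNReal.ofReal (b - a) * g = ∫⁻ t in Ioc a b, g := by
        rw [setLIntegral_const, Real.volume_Ioc, mul_comm]
    _ ≤ ∫⁻ t in Ioc a b, K * ∑ i, (Ioc (v i - w i) (v i)).indicator (fun _ => (w i : ℝ≥0∞)) t :=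
        setLIntegral_mono' measurableSet_Ioc h
    _ ≤ ∫⁻ t, K * ∑ i, (Ioc (v i - w i) (v i)).indicator (fun _ => (w i : ℝ≥0∞)) t :=
        setLIntegral_le_lintegral _ _
    _ = K * ∑ i, (w i : ℝ≥0∞) ^ 2 := by
        rw [lintegral_const_mul _ (Finset.measurable_fun_sum _ fun i _ => hm i),
          lintegral_finsetSum _ fun i _ => hm i]
        congr 1
        refine Finset.sum_congr rfl fun i _ => ?_
        rw [lintegral_indicator_const measurableSet_Ioc, Real.volume_Ioc]
        simp [sq]

lemma potential {ι : Type*} (G : SimpleGraph ι) (w : ι → ℝ≥0) (S S' : Set ι) {T : ℝ} (hT : 0 < T)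
    (hno : ∀ a ∈ S, ∀ i ∈ S', ∀ p : G.Walk a i, T ≤ (p.support.map fun i => (w i : ℝ)).sum) :
    ∃ v : ι → ℝ, (∀ a ∈ S, v a ≤ w a) ∧ (∀ i k, G.Adj i k → v k ≤ v i + w k) ∧
      ∀ i ∈ S', T ≤ v i := by
  let Q : ι → Set ℝ := fun i => insert T {r | ∃ a ∈ S, ∃ p : G.Walk a i,
    r = (p.support.map fun i => (w i : ℝ)).sum}
  have hnn : ∀ i, ∀ r ∈ Q i, 0 ≤ r := by
    rintro i r (rfl | ⟨a, ha, p, rfl⟩)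
    · exact hT.le
    · exact List.sum_nonneg (by simp)
  have hbdd : ∀ i, BddBelow (Q i) := fun i => ⟨0, fun r hr => hnn i r hr⟩
  have hne : ∀ i, (Q i).Nonempty := fun i => ⟨T, mem_insert _ _⟩
  refine ⟨fun i => sInf (Q i), ?_, ?_, ?_⟩
  · intro a ha
    refine csInf_le (hbdd a) (Or.inr ⟨a, ha, SimpleGraph.Walk.nil, by simp⟩)
  · intro i k hik
    rw [← sub_le_iff_le_add]
    refine le_csInf (hne i) ?_
    rintro r (rfl | ⟨a, ha, p, rfl⟩)
    · rw [sub_le_iff_le_add]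
      exact (csInf_le (hbdd k) (mem_insert _ _)).trans (by simp)
    · rw [sub_le_iff_le_add]
      refine csInf_le (hbdd k) (Or.inr ⟨a, ha, p.concat hik, ?_⟩)
      rw [SimpleGraph.Walk.support_concat]; simp
  · intro i hi
    refine le_csInf (hne i) ?_
    rintro r (rfl | ⟨a, ha, p, rfl⟩)
    · exact le_rfl
    · exact hno a ha i hi p

lemma walk_q {X : Type*} [MetricSpace X] [MeasurableSpace X] {μ : Measure X} {ι : Type*}
    (G : SimpleGraph ι) (c : ι → X) (w : ι → ℝ≥0∞) {δ : ℝ}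
    (hadj : ∀ i k, G.Adj i k → dist (c i) (c k) ≤ δ ∧ μ (pairBall (c i) (c k)) ^ (1 / 2 : ℝ) ≤ w i)
    {i k : ι} (p : G.Walk i k) : ∀ m ∈ p.support, qDelta μ 2 δ (c i) (c m) ≤ (p.support.map w).sum := by
  induction p with
  | nil => intro m hm; simp at hm; subst hm; simp [qDelta_self]
  | cons hh p ih =>
    intro m hm
    simp only [SimpleGraph.Walk.support_cons, List.mem_cons, List.map_cons, List.sum_cons] at hm ⊢
    rcases hm with rfl | hm
    · simp [qDelta_self]
    · refine (qDelta_triangle δ _ _ _).trans (add_le_add ?_ (ih m hm))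
      exact (qDelta_one (hadj _ _ hh).1).trans (hadj _ _ hh).2

lemma walk_union {X : Type*} [TopologicalSpace X] {ι : Type*} (A : ι → Set X) (V : Set ι)
    (hA : ∀ i, IsPreconnected (A i)) {i k : ι} (p : (nerve A V).Walk i k) :
    IsPreconnected (⋃ m ∈ p.support, A m) := by
  induction p with
  | nil => simpa using hA _
  | @cons u v' w' hh p ih =>
    have : (⋃ m ∈ (SimpleGraph.Walk.cons hh p).support, A m) = A u ∪ ⋃ m ∈ p.support, A m := by
      simp [iUnion_or, iUnion_union_distrib]
    rw [this]
    obtain ⟨z, hz1, hz2⟩ := hh.2.2.2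
    exact (hA u).union z hz1 (mem_iUnion₂.2 ⟨v', p.start_mem_support, hz2⟩) ih

end

section


lemma loewner {X : Type*} [MetricSpace X] [MeasurableSpace X] [BorelSpace X] {μ : Measure X}
    {CD CW : ℝ≥0} (ℓ : ℕ) (hLLC : IsLLC X (2 ^ ℓ)) {j : E2 → X} (hj : IsOpenEmbedding j)
    (h : IsDoublingWith μ CD) (hw : IsWMDM μ 2 CW) (hCW : CW ≠ 0)
    (hsm : ∀ η : ℝ≥0∞, 0 < η → ∃ ε > 0, ∀ z : X, gg μ z ε ≤ η)
    (htb : TotallyBounded (univ : Set X)) {x : X} {ρ : ℝ} (hρ : 0 < ρ)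
    (hball : closedBall x (2 ^ (6 + 2 * ℓ) * ρ) ⊆ j '' closedBall 0 1)
    {E F : Set X} (hE : IsPreconnected E) (hF : IsPreconnected F) {e₀ e₁ f₀ f₁ : X}
    (he₀ : e₀ ∈ E) (he₁ : e₁ ∈ E) (hf₀ : f₀ ∈ F) (hf₁ : f₁ ∈ F)
    (he : ρ ≤ dist e₀ e₁) (hf : ρ ≤ dist f₀ f₁)
    (he₀x : e₀ ∈ Metric.ball x (2 ^ (3 + ℓ) * ρ)) (hf₀x : f₀ ∈ Metric.ball x (2 ^ (3 + ℓ) * ρ))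
    {δ : ℝ} (hδ : 0 < δ) :
    ∃ P : Set X, IsPreconnected P ∧ (P ∩ E).Nonempty ∧ (P ∩ F).Nonempty ∧
      ∀ a ∈ P, ∀ b ∈ P, qDelta μ 2 δ a b ≤ 24 * CW * (CD : ℝ≥0∞) ^ (14 + 5 * ℓ) * gg μ x ρ := by
  classical
  set L : ℝ := 2 ^ ℓ with hLdef
  have hL1 : 1 ≤ L := one_le_pow₀ (by norm_num)
  have hL0 : 0 < L := by linarith
  set g := gg μ x ρ with hg
  have hgpos := h.gg_pos x hρ
  have hCD1 : (1 : ℝ≥0∞) ≤ CD := h.one_le x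
  set T' : ℝ≥0∞ := 8 * CW * (CD : ℝ≥0∞) ^ (14 + 5 * ℓ) * g with hT'
  have hT'top : T' ≠ ⊤ := by
    rw [hT']; exact ENNReal.mul_ne_top (ENNReal.mul_ne_top (by simp [ENNReal.mul_eq_top]) (by simp)) hgpos.2.ne
  have hT'pos : 0 < T' := by
    rw [hT']
    have : (CD : ℝ≥0∞) ^ (14 + 5 * ℓ) ≠ 0 := pow_ne_zero _ (by positivity)
    have h3 : (CW : ℝ≥0∞) ≠ 0 := by simpa using hCW
    have := hgpos.1.ne'
    positivity
  set T : ℝ := T'.toReal with hT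
  have hTT : ENNReal.ofReal T = T' := ENNReal.ofReal_toReal hT'top
  have hTpos : 0 < T := ENNReal.toReal_pos hT'pos.ne' hT'top
  -- compactness
  have hG : IsCompact (closedBall x (2 ^ (6 + 2 * ℓ) * ρ)) :=
    ((isCompact_closedBall (0 : E2) 1).image hj.continuous).of_isClosed_subset isClosed_closedBall hball
  obtain ⟨δ₀, hδ₀, hU⟩ := lowerU h hw hsm hG (ρ := ρ / (4 * L)) (by positivity)
  obtain ⟨ε₀, hε₀, hsm0⟩ := hsm (T' / 4) (by simpa [ENNReal.div_pos_iff] using hT'pos.ne')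
  obtain ⟨ε, hε, hεδ, hεδ₀, hερ, hερ', hε0⟩ : ∃ ε > 0, 2 * L * ε ≤ δ ∧ 2 * L * ε ≤ δ₀ ∧
      L * ε < ρ / (4 * L) ∧ ε ≤ ρ ∧ 4 * L * ε ≤ ε₀ := by
    refine ⟨min (min (δ / (2 * L)) (δ₀ / (2 * L))) (min (min (ρ / (4 * L) / (2 * L)) ρ) (ε₀ / (4 * L))),
      by positivity, ?_, ?_, ?_, ?_, ?_⟩
    · rw [mul_comm, ← le_div_iff₀ (by positivity)]; exact (min_le_left _ _).trans (min_le_left _ _)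
    · rw [mul_comm, ← le_div_iff₀ (by positivity)]; exact (min_le_left _ _).trans (min_le_right _ _)
    · rw [mul_comm, ← lt_div_iff₀ (by positivity)]
      refine ((min_le_right _ _).trans ((min_le_left _ _).trans (min_le_left _ _))).trans_lt ?_
      exact div_lt_div_of_pos_left (by positivity) (by positivity) (by linarith)
    · exact (min_le_right _ _).trans ((min_le_left _ _).trans (min_le_right _ _))
    · rw [mul_comm, ← le_div_iff₀ (by positivity)]; exact (min_le_right _ _).trans (min_le_right _ _)
  obtain ⟨N, hNfin, hNsub, hNsep, hNcov⟩ := exists_net (Metric.ball x (2 ^ (5 + 2 * ℓ) * ρ))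
    (htb.subset (subset_univ _)) hε
  have : Finite N := hNfin.to_subtype
  cases nonempty_fintype N
  let c : N → X := fun i => i
  let A : N → Set X := fun i => closure (connectedComponentIn (Metric.ball (c i) (L * ε)) (c i))
  have hAcl : ∀ i, IsClosed (A i) := fun i => isClosed_closure
  have hApre : ∀ i, IsPreconnected (A i) := fun i => isPreconnected_connectedComponentIn.closure
  have hAsub : ∀ i, A i ⊆ closedBall (c i) (L * ε) := fun i =>
    closure_minimal ((connectedComponentIn_subset _ _).trans Metric.ball_subset_closedBall)
      isClosed_closedBall
  have hAsup : ∀ i, Metric.ball (c i) ε ⊆ A i := by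
    intro i y hy
    obtain ⟨K, hK, hKsub, hyK, hcK⟩ := (hLLC (c i) ε hε).1 y hy (c i) (Metric.mem_ball_self hε)
    exact subset_closure (hK.2.isPreconnected.subset_connectedComponentIn hcK hKsub hyK)
  let w : N → ℝ≥0 := fun i => (gg μ (c i) (4 * L * ε)).toNNReal
  have hwc : ∀ i, (w i : ℝ≥0∞) = gg μ (c i) (4 * L * ε) := fun i =>
    ENNReal.coe_toNNReal (h.gg_pos (c i) (by positivity)).2.ne
  have hw4' : ∀ i, (w i : ℝ≥0∞) ≤ T' / 4 := by
    intro i; rw [hwc]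
    exact (gg_mono (by rw [dist_self]; linarith)).trans (hsm0 (c i))
  have hw4 : ∀ i, (w i : ℝ) ≤ T / 4 := by
    intro i
    have := ENNReal.toReal_mono (by simp [ENNReal.div_eq_top, hT'top]) (hw4' i)
    simpa using this
  have hadj : ∀ V i k, (nerve A V).Adj i k → dist (c i) (c k) ≤ 2 * L * ε ∧
      μ (pairBall (c i) (c k)) ^ (1 / 2 : ℝ) ≤ w i := by
    intro V i k hik
    obtain ⟨z, hz1, hz2⟩ := hik.2.2.2
    have h1 := hAsub i hz1
    have h2 := hAsub k hz2
    rw [mem_closedBall] at h1 h2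
    have h3 := dist_triangle_left (c i) (c k) z
    have h4 : dist (c i) (c k) ≤ 2 * L * ε := by linarith
    refine ⟨h4, ?_⟩
    rw [hwc]
    refine rt_pair_le ?_ ?_
    · rw [dist_self]; nlinarith
    · rw [dist_comm (c k)]; linarith
  let S : Set N := {i | (A i ∩ E).Nonempty}
  let S' : Set N := {i | (A i ∩ F).Nonempty}
  by_cases hwalk : ∃ a ∈ S, ∃ i ∈ S', ∃ p : (nerve A univ).Walk a i,
      (p.support.map fun i => (w i : ℝ)).sum < T
  · obtain ⟨a, ⟨za, hza, hzaE⟩, i, ⟨zi, hzi, hziF⟩, p, hp⟩ := hwalk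
    refine ⟨⋃ m ∈ p.support, A m, walk_union A univ hApre p,
      ⟨za, mem_iUnion₂.2 ⟨a, p.start_mem_support, hza⟩, hzaE⟩,
      ⟨zi, mem_iUnion₂.2 ⟨i, p.end_mem_support, hzi⟩, hziF⟩, ?_⟩
    have hcost : (p.support.map fun i => (w i : ℝ≥0∞)).sum ≤ T' := by
      have e1 : (p.support.map fun i => (w i : ℝ≥0∞)).sum = (((p.support.map w).sum : ℝ≥0) : ℝ≥0∞) := by
        generalize p.support = l
        induction l with
        | nil => simp
        | cons a l ih => simp [ih]
      have e2 : (p.support.map fun i => (w i : ℝ)).sum = (((p.support.map w).sum : ℝ≥0) : ℝ) := by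
        generalize p.support = l
        induction l with
        | nil => simp
        | cons a l ih => simp [ih]
      rw [e1, ← hTT, ENNReal.ofReal, ENNReal.coe_le_coe]
      rw [e2] at hp
      exact NNReal.le_toNNReal_of_coe_le hp.le
    have hq : ∀ m ∈ p.support, qDelta μ 2 δ (c a) (c m) ≤ T' := fun m hm =>
      (walk_q (nerve A univ) c (fun i => (w i : ℝ≥0∞))
        (fun i k hik => ⟨((hadj _ i k hik).1).trans hεδ, (hadj _ i k hik).2⟩) p m hm).trans hcost
    have hq2 : ∀ z ∈ ⋃ m ∈ p.support, A m, qDelta μ 2 δ (c a) z ≤ T' + T' / 4 := by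
      intro z hz
      obtain ⟨m, hm, hzm⟩ := mem_iUnion₂.1 hz
      have hd := hAsub m hzm
      rw [mem_closedBall, dist_comm] at hd
      refine (qDelta_step _ (hd.trans (by nlinarith))).trans (add_le_add (hq m hm) ((le_trans ?_ (hw4' m))))
      rw [hwc]
      refine rt_pair_le ?_ ?_
      · rw [dist_self]; nlinarith
      · rw [dist_comm z]; nlinarith
    intro z hz z' hz'
    calc qDelta μ 2 δ z z' ≤ qDelta μ 2 δ z (c a) + qDelta μ 2 δ (c a) z' := qDelta_triangle _ _ _ _
      _ ≤ (T' + T' / 4) + (T' + T' / 4) := by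
          rw [qDelta_comm]; exact add_le_add (hq2 z hz) (hq2 z' hz')
      _ = 2 * T' + 2 * (T' / 4) := by ring
      _ ≤ 2 * T' + T' := by
          gcongr
          rw [← mul_div_assoc]
          refine ENNReal.div_le_of_le_mul ?_
          rw [mul_comm]; gcongr; norm_num
      _ = _ := by rw [hT']; ring
  · exfalso
    push Not at hwalk
    obtain ⟨v, hvS, hvadj, hvS'⟩ := potential (nerve A univ) w S S' hTpos
      (fun a ha i hi p => hwalk a ha i hi p)
    have hclosed_mem : ∀ i, c i ∈ closedBall x (2 ^ (6 + 2 * ℓ) * ρ) := by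
      intro i
      refine Metric.closedBall_subset_closedBall ?_ (Metric.ball_subset_closedBall (hNsub i.2))
      gcongr <;> norm_num
    have key : ∀ t ∈ Ioc (T / 4) (3 * T / 4), g ≤ (2 * CW * (CD : ℝ≥0∞) ^ (5 + 2 * ℓ)) *
        ∑ i, (Ioc (v i - w i) (v i)).indicator (fun _ => (w i : ℝ≥0∞)) t := by
      intro t ht
      set V : Set N := {i | t ∈ Ioc (v i - w i) (v i)} with hV
      by_cases hdiam : ∀ i ∈ V, ∀ i' ∈ V, (nerve A V).Reachable i i' → dist (c i) (c i') < ρ / (4 * L)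
      · exfalso
        have hp1 : (2 : ℝ) ^ (4 + 2 * ℓ) = 16 * L * L := by rw [hLdef]; ring
        have hp2 : (2 : ℝ) ^ (3 + ℓ) = 8 * L := by rw [hLdef]; ring
        obtain ⟨C, hC, hCsub, hCdis, heC, hfC⟩ := sep_lemma hL1 hLLC hj (x := x)
          (k := 2 ^ (3 + ℓ) * ρ) (Λ := 2 ^ (4 + 2 * ℓ) * ρ) hρ (by positivity)
          (by rw [hp1, hp2]; nlinarith [mul_pos hρ (mul_pos hL0 hL0), mul_le_mul hL1 hL1 zero_le_one hL0.le])
          ((Metric.closedBall_subset_closedBall (by gcongr <;> norm_num)).trans hball)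
          hE hF he₀ he₁ hf₀ hf₁ he hf he₀x hf₀x A c hερ hAcl hAsub V
          (by
            intro i hi
            rw [Set.disjoint_iff_inter_eq_empty, ← Set.not_nonempty_iff_eq_empty]
            intro hne
            have h1 := hvS i hne
            have h2 := hi.2
            have h3 := hw4 i
            have h4 := ht.1
            linarith)
          (by
            intro i hi
            rw [Set.disjoint_iff_inter_eq_empty, ← Set.not_nonempty_iff_eq_empty]
            intro hne
            have h1 := hvS' i hne
            have h2 := hi.1
            have h3 := hw4 i
            have h4 := ht.2
            linarith)
          hdiam
        have hcov : ∀ z ∈ C, ∃ i : N, dist z (c i) < ε := by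
          intro z hz
          obtain ⟨y, hy, hzy⟩ := hNcov z (Metric.ball_subset_ball (by gcongr <;> norm_num) (hCsub hz))
          exact ⟨⟨y, hy⟩, hzy⟩
        let U1 : Set X := ⋃ i ∈ {i : N | v i < t}, Metric.ball (c i) ε
        let U2 : Set X := ⋃ i ∈ {i : N | t + w i ≤ v i}, Metric.ball (c i) ε
        have hU1 : IsOpen U1 := isOpen_biUnion fun i _ => Metric.isOpen_ball
        have hU2 : IsOpen U2 := isOpen_biUnion fun i _ => Metric.isOpen_ball
        have hCU : C ⊆ U1 ∪ U2 := by
          intro z hz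
          obtain ⟨i, hi⟩ := hcov z hz
          have hiV : i ∉ V := fun hiV => disjoint_left.1 (hCdis i hiV) hz (hAsup i hi)
          by_cases hlt : v i < t
          · exact Or.inl (mem_iUnion₂.2 ⟨i, hlt, hi⟩)
          · right
            refine mem_iUnion₂.2 ⟨i, ?_, hi⟩
            by_contra hcon
            refine hiV ⟨?_, not_lt.1 hlt⟩
            have : ¬ (t + w i ≤ v i) := hcon
            push Not at this
            linarith
        have heU : (C ∩ U1).Nonempty := by
          obtain ⟨i, hi⟩ := hcov e₀ heC
          refine ⟨e₀, heC, mem_iUnion₂.2 ⟨i, ?_, hi⟩⟩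
          have h1 := hvS i ⟨e₀, hAsup i hi, he₀⟩
          have h2 := hw4 i
          have h3 := ht.1
          show v i < t
          linarith
        have hfU : (C ∩ U2).Nonempty := by
          obtain ⟨i, hi⟩ := hcov f₀ hfC
          refine ⟨f₀, hfC, mem_iUnion₂.2 ⟨i, ?_, hi⟩⟩
          have h1 := hvS' i ⟨f₀, hAsup i hi, hf₀⟩
          have h2 := hw4 i
          have h3 := ht.2
          show t + w i ≤ v i
          linarith
        obtain ⟨z, -, hz1, hz2⟩ := hC U1 U2 hU1 hU2 hCU heU hfU
        obtain ⟨i, hi, hzi⟩ := mem_iUnion₂.1 hz1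
        obtain ⟨k, hk, hzk⟩ := mem_iUnion₂.1 hz2
        have hi : v i < t := hi
        have hk : t + w k ≤ v k := hk
        by_cases hik : i = k
        · subst hik
          have : (0 : ℝ) ≤ w i := (w i).2
          linarith
        · have := hvadj i k ⟨hik, mem_univ _, mem_univ _, z, hAsup i hzi, hAsup k hzk⟩
          linarith
      · push Not at hdiam
        obtain ⟨i, hi, k, hk, hreach, hdist⟩ := hdiam
        obtain ⟨p, hp⟩ := hreach.exists_isPath
        have h1 := walk_q (μ := μ) (nerve A V) c (fun i => (w i : ℝ≥0∞))
          (fun i k hik => ⟨((hadj _ i k hik).1).trans hεδ₀, (hadj _ i k hik).2⟩) p k p.end_mem_support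
        have hsuppV : ∀ m ∈ p.support, m ∈ V := by
          intro m hm
          have aux : ∀ {i k : N} (p : (nerve A V).Walk i k), i ∈ V → ∀ m ∈ p.support, m ∈ V := by
            intro i k p
            induction p with
            | nil => intro hi m hm; simp at hm; rwa [hm]
            | cons hh p ih =>
              intro hi m hm
              simp only [SimpleGraph.Walk.support_cons, List.mem_cons] at hm
              rcases hm with rfl | hm
              · exact hi
              · exact ih hh.2.2.1 m hm
          exact aux p hi m hm
        have h2 : (p.support.map fun i => (w i : ℝ≥0∞)).sum ≤
            ∑ i, (Ioc (v i - w i) (v i)).indicator (fun _ => (w i : ℝ≥0∞)) t := by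
          rw [← List.sum_toFinset _ hp.support_nodup]
          calc ∑ m ∈ p.support.toFinset, (w m : ℝ≥0∞)
              = ∑ m ∈ p.support.toFinset,
                (Ioc (v m - w m) (v m)).indicator (fun _ => (w m : ℝ≥0∞)) t := by
                refine Finset.sum_congr rfl fun m hm => ?_
                have : t ∈ Ioc (v m - w m) (v m) := hsuppV m (List.mem_toFinset.1 hm)
                rw [indicator_of_mem this]
            _ ≤ _ := Finset.sum_le_sum_of_subset (Finset.subset_univ _)
        have h3 := hU (c i) (hclosed_mem i) (c k) (hclosed_mem k) hdist
        have h4 : g ≤ (CD : ℝ≥0∞) ^ (5 + 2 * ℓ) * gg μ (c i) (ρ / (4 * L) / 2) := by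
          refine le_trans ?_ (h.gg_pow (5 + 2 * ℓ) (c i) (by positivity))
          refine gg_mono ?_
          have hx := hNsub i.2
          rw [mem_ball, dist_comm] at hx
          have e1 : (4 : ℝ) ^ (5 + 2 * ℓ) * (ρ / (4 * L) / 2) = 128 * L * L * L * ρ := by
            have : (4 : ℝ) ^ (5 + 2 * ℓ) = 1024 * L * L * L * L := by
              rw [hLdef, show (4 : ℝ) = 2 ^ 2 by norm_num, ← pow_mul]; ring
            rw [this]; field_simp; norm_num
          have e2 : (2 : ℝ) ^ (5 + 2 * ℓ) = 32 * L * L := by rw [hLdef]; ring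
          rw [e1]
          rw [e2] at hx
          have hLL : 1 ≤ L * L := by nlinarith
          have : L * L * ρ ≤ L * L * L * ρ := by nlinarith [mul_pos (mul_pos hL0 hL0) hρ]
          have : ρ ≤ L * L * ρ := by nlinarith
          change ρ + dist x (i : X) ≤ _
          nlinarith
        calc g ≤ (CD : ℝ≥0∞) ^ (5 + 2 * ℓ) * gg μ (c i) (ρ / (4 * L) / 2) := h4
          _ ≤ (CD : ℝ≥0∞) ^ (5 + 2 * ℓ) * (2 * CW * qDelta μ 2 δ₀ (c i) (c k)) := by gcongr
          _ = (2 * CW * (CD : ℝ≥0∞) ^ (5 + 2 * ℓ)) * qDelta μ 2 δ₀ (c i) (c k) := by ring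
          _ ≤ _ := by gcongr; exact h1.trans h2
    have hco := coarea v w key
    have hsum : ∑ i, (w i : ℝ≥0∞) ^ 2 ≤ (CD : ℝ≥0∞) ^ (9 + 3 * ℓ) * g ^ 2 := by
      calc ∑ i, (w i : ℝ≥0∞) ^ 2 = ∑ i, μ (Metric.ball (c i) (4 * L * ε)) := by
            refine Finset.sum_congr rfl fun i _ => ?_
            rw [hwc, gg_sq]
        _ ≤ ∑ i, (CD : ℝ≥0∞) ^ (3 + ℓ) * μ (Metric.ball (c i) (ε / 2)) := by
            refine Finset.sum_le_sum fun i _ => ?_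
            have := h.pow (3 + ℓ) (c i) (r := ε / 2) (by positivity)
            refine le_trans (le_of_eq ?_) this
            congr 2
            rw [hLdef]; ring
        _ = (CD : ℝ≥0∞) ^ (3 + ℓ) * ∑ i, μ (Metric.ball (c i) (ε / 2)) := by rw [Finset.mul_sum]
        _ ≤ (CD : ℝ≥0∞) ^ (3 + ℓ) * μ (Metric.ball x (2 ^ (6 + 2 * ℓ) * ρ)) := by
            gcongr
            rw [← tsum_fintype (L := .unconditional _), ← measure_iUnion ?_ fun i => measurableSet_ball]
            · refine measure_mono (iUnion_subset fun i => Metric.ball_subset_ball' ?_)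
              have hx := hNsub i.2
              rw [mem_ball] at hx
              have : (2 : ℝ) ^ (6 + 2 * ℓ) = 2 * 2 ^ (5 + 2 * ℓ) := by ring
              have h1 : (1 : ℝ) ≤ 2 ^ (5 + 2 * ℓ) := one_le_pow₀ (by norm_num)
              change ε / 2 + dist (i : X) x ≤ _
              nlinarith
            · intro i k hik
              refine Metric.ball_disjoint_ball ?_
              have := hNsep i i.2 k k.2 (fun hh => hik (Subtype.ext hh))
              change _ ≤ dist (i : X) k
              linarith
        _ ≤ (CD : ℝ≥0∞) ^ (3 + ℓ) * ((CD : ℝ≥0∞) ^ (6 + 2 * ℓ) * μ (Metric.ball x ρ)) := by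
            gcongr; exact h.pow _ x hρ
        _ = _ := by rw [hg, gg_sq]; ring
    have hfin : ENNReal.ofReal (3 * T / 4 - T / 4) * g = 4 * CW * (CD : ℝ≥0∞) ^ (14 + 5 * ℓ) * g ^ 2 := by
      have : 3 * T / 4 - T / 4 = T / 2 := by ring
      rw [this, ENNReal.ofReal_div_of_pos (by norm_num), hTT, hT']
      simp only [ENNReal.ofReal_ofNat]
      have e8 : (8 : ℝ≥0∞) * CW * (CD : ℝ≥0∞) ^ (14 + 5 * ℓ) * g =
        (4 * CW * (CD : ℝ≥0∞) ^ (14 + 5 * ℓ) * g) * 2 := by ring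
      rw [e8, ENNReal.mul_div_cancel_right (by norm_num) (by norm_num)]
      ring
    rw [hfin] at hco
    set Q := 2 * CW * (CD : ℝ≥0∞) ^ (14 + 5 * ℓ) * g ^ 2 with hQ
    have hQpos : Q ≠ 0 := by
      have h1 : (CD : ℝ≥0∞) ^ (14 + 5 * ℓ) ≠ 0 := pow_ne_zero _ (by positivity)
      have h3 : (CW : ℝ≥0∞) ≠ 0 := by simpa using hCW
      have h4 : g ^ 2 ≠ 0 := pow_ne_zero _ hgpos.1.ne'
      rw [hQ]
      simp only [ne_eq, mul_eq_zero, not_or]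
      exact ⟨⟨⟨by norm_num, h3⟩, h1⟩, h4⟩
    have hQtop : Q ≠ ⊤ := by
      rw [hQ]
      exact ENNReal.mul_ne_top (ENNReal.mul_ne_top (by simp [ENNReal.mul_eq_top]) (by simp))
        (ENNReal.pow_ne_top hgpos.2.ne)
    have hle : Q + Q ≤ Q := by
      calc Q + Q = 4 * CW * (CD : ℝ≥0∞) ^ (14 + 5 * ℓ) * g ^ 2 := by rw [hQ]; ring
        _ ≤ _ := hco
        _ ≤ (2 * CW * (CD : ℝ≥0∞) ^ (5 + 2 * ℓ)) * ((CD : ℝ≥0∞) ^ (9 + 3 * ℓ) * g ^ 2) := by gcongr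
        _ = Q := by rw [hQ]; ring
    exact absurd hle (not_le.2 (ENNReal.lt_add_right hQtop hQpos))

end

section


/-- a connected set through `x` of size at least `ρ` with controlled `q` distances -/
def St {X : Type*} [MetricSpace X] [MeasurableSpace X] (μ : Measure X) (δ : ℝ) (x : X) (ρ : ℝ)
    (s : ℝ≥0∞) : Prop :=
  ∃ E : Set X, IsPreconnected E ∧ x ∈ E ∧ (∃ b ∈ E, ρ ≤ dist x b) ∧ ∀ a ∈ E, qDelta μ 2 δ x a ≤ s

section pw
variable {X : Type*} [MetricSpace X] [MeasurableSpace X] [BorelSpace X] {μ : Measure X}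
    {CD CW : ℝ≥0} (ℓ : ℕ) (hLLC : IsLLC X (2 ^ ℓ)) {j : E2 → X} (hj : IsOpenEmbedding j)
    (h : IsDoublingWith μ CD) (hw : IsWMDM μ 2 CW) (hCW : CW ≠ 0)
    (hsm : ∀ η : ℝ≥0∞, 0 < η → ∃ ε > 0, ∀ z : X, gg μ z ε ≤ η)
    (htb : TotallyBounded (univ : Set X)) {rX : ℝ}
    (hex : ∀ z : X, ∀ s, 0 < s → s ≤ rX → ∃ y, dist z y = s)

lemma St_start {X : Type*} [MetricSpace X] [MeasurableSpace X] {μ : Measure X}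
    (ℓ : ℕ) (hLLC : IsLLC X (2 ^ ℓ)) {rX : ℝ}
    (hex : ∀ z : X, ∀ s, 0 < s → s ≤ rX → ∃ y, dist z y = s)
    (x : X) {δ ρ : ℝ} (hρ : 0 < ρ) (h1 : ρ ≤ rX) (h2 : 2 * 2 ^ ℓ * ρ ≤ δ) :
    St μ δ x ρ (gg μ x (4 * 2 ^ ℓ * ρ)) := by
  obtain ⟨z, hz⟩ := hex x ρ hρ h1
  obtain ⟨K, hK, hKs, hx, hzK⟩ := (hLLC x (2 * ρ) (by positivity)).1 x
    (Metric.mem_ball_self (by positivity)) z (by rw [Metric.mem_ball, dist_comm]; linarith)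
  refine ⟨K, hK.2.isPreconnected, hx, ⟨z, hzK, hz.ge⟩, fun a ha => ?_⟩
  have hd := hKs ha
  rw [Metric.mem_ball, dist_comm] at hd
  refine (qDelta_one (by linarith)).trans (rt_pair_le ?_ ?_)
  · rw [dist_self]; linarith [dist_nonneg (x := x) (y := a)]
  · rw [dist_comm a]; linarith

include hLLC hj h hw hCW hsm htb hex in
lemma St_step {x : X} {δ ρ : ℝ} (hδ : 0 < δ) (hρ : 0 < ρ) (h1 : (2 * 2 ^ ℓ + 4) * ρ ≤ rX)
    (hball : closedBall x (2 ^ (6 + 2 * ℓ) * ρ) ⊆ j '' closedBall 0 1) {s : ℝ≥0∞}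
    (hS : St μ δ x ρ s) :
    St μ δ x (4 * ρ) (s + 24 * CW * (CD : ℝ≥0∞) ^ (14 + 5 * ℓ) * gg μ x ρ) := by
  obtain ⟨E, hE, hxE, ⟨b, hbE, hb⟩, hq⟩ := hS
  have hL1 : (1 : ℝ) ≤ 2 ^ ℓ := one_le_pow₀ (by norm_num)
  obtain ⟨z, hz⟩ := hex x ((2 * 2 ^ ℓ + 4) * ρ) (by positivity) h1
  obtain ⟨z', hz'⟩ := hex z ρ hρ (by nlinarith)
  obtain ⟨F, hF, hFs, hzF, hz'F⟩ := (hLLC z (2 * ρ) (by positivity)).1 z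
    (Metric.mem_ball_self (by positivity)) z' (by rw [Metric.mem_ball, dist_comm]; linarith)
  have hp2 : (2 : ℝ) ^ (3 + ℓ) = 8 * 2 ^ ℓ := by ring
  obtain ⟨P, hP, ⟨p1, hp1P, hp1E⟩, ⟨p2, hp2P, hp2F⟩, hPq⟩ := loewner ℓ hLLC hj h hw hCW hsm htb hρ hball
    hE hF.2.isPreconnected hxE hbE hzF hz'F hb hz'.ge (Metric.mem_ball_self (by positivity))
    (by rw [Metric.mem_ball, dist_comm, hz, hp2]; nlinarith) hδ
  refine ⟨E ∪ P, hE.union p1 hp1E hp1P hP, Or.inl hxE, ⟨p2, Or.inr hp2P, ?_⟩, ?_⟩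
  · have := hFs hp2F
    rw [Metric.mem_ball] at this
    have h3 := dist_triangle x p2 z
    nlinarith
  · rintro a (ha | ha)
    · exact (hq a ha).trans le_self_add
    · exact (qDelta_triangle δ _ p1 _).trans (add_le_add (hq p1 hp1E) (hPq _ hp1P _ ha))

include hLLC hj h hw hCW hsm htb hex in
lemma St_iter {x : X} {δ : ℝ} (hδ : 0 < δ) (n : ℕ) : ∀ {ρ : ℝ}, 0 < ρ → 8 * 2 ^ ℓ * ρ ≤ rX →
    closedBall x (2 ^ (6 + 2 * ℓ) * ρ) ⊆ j '' closedBall 0 1 → 2 * 2 ^ ℓ * (ρ / 4 ^ n) ≤ δ →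
    St μ δ x ρ (gg μ x (4 * 2 ^ ℓ * (ρ / 4 ^ n)) +
      4 * (CD : ℝ≥0∞) ^ 2 * (24 * CW * (CD : ℝ≥0∞) ^ (14 + 5 * ℓ)) * gg μ x ρ) := by
  have hL1 : (1 : ℝ) ≤ 2 ^ ℓ := one_le_pow₀ (by norm_num)
  induction n with
  | zero =>
    intro ρ hρ h1 _ h2
    obtain ⟨E, e1, e2, e3, e4⟩ := St_start (μ := μ) ℓ hLLC hex x hρ (by nlinarith) (by simpa using h2)
    refine ⟨E, e1, e2, e3, fun a ha => (e4 a ha).trans ?_⟩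
    simp
  | succ n ih =>
    intro ρ hρ h1 hball h2
    have e1 : ρ / 4 / 4 ^ n = ρ / 4 ^ (n + 1) := by rw [pow_succ]; field_simp
    have e2 : 4 * (ρ / 4) = ρ := by ring
    have hball' : closedBall x (2 ^ (6 + 2 * ℓ) * (ρ / 4)) ⊆ j '' closedBall 0 1 := by
      refine (Metric.closedBall_subset_closedBall ?_).trans hball
      gcongr; linarith
    have h3 := ih (ρ := ρ / 4) (by positivity) (by nlinarith) hball' (by rwa [e1])
    have h4 := St_step ℓ hLLC hj h hw hCW hsm htb hex hδ (by positivity) (by nlinarith) hball' h3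
    rw [e2, e1] at h4
    obtain ⟨E, e1, e2', e3, e4⟩ := h4
    refine ⟨E, e1, e2', e3, fun a ha => (e4 a ha).trans ?_⟩
    have h5 := rev_gg h hex x (ρ := ρ / 4) (by positivity) (by nlinarith)
    rw [e2] at h5
    rw [add_assoc]
    gcongr
    calc _ = (24 * CW * (CD : ℝ≥0∞) ^ (14 + 5 * ℓ)) * ((4 * (CD : ℝ≥0∞) ^ 2 + 1) * gg μ x (ρ / 4)) := by
          ring
      _ ≤ (24 * CW * (CD : ℝ≥0∞) ^ (14 + 5 * ℓ)) * (4 * (CD : ℝ≥0∞) ^ 2 * gg μ x ρ) := by gcongr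
      _ = _ := by ring

include hLLC hj h hw hCW hsm htb hex in
lemma St_final {x : X} {δ : ℝ} (hδ : 0 < δ) {ρ : ℝ} (hρ : 0 < ρ) (h1 : 8 * 2 ^ ℓ * ρ ≤ rX)
    (hball : closedBall x (2 ^ (6 + 2 * ℓ) * ρ) ⊆ j '' closedBall 0 1) {η : ℝ≥0∞} (hη : 0 < η) :
    St μ δ x ρ (η +
      4 * (CD : ℝ≥0∞) ^ 2 * (24 * CW * (CD : ℝ≥0∞) ^ (14 + 5 * ℓ)) * gg μ x ρ) := by
  obtain ⟨ε, hε, he⟩ := hsm η hη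
  have ht : Tendsto (fun n : ℕ => (4 * 2 ^ ℓ * ρ) * (1 / 4 : ℝ) ^ n) atTop (𝓝 0) := by
    simpa using (tendsto_pow_atTop_nhds_zero_of_lt_one (r := (1/4 : ℝ)) (by norm_num)
      (by norm_num)).const_mul (4 * 2 ^ ℓ * ρ)
  obtain ⟨n, hn⟩ := (ht.eventually (ge_mem_nhds (lt_min hε hδ))).exists
  have e : (4 * 2 ^ ℓ * ρ) * (1 / 4 : ℝ) ^ n = 4 * 2 ^ ℓ * (ρ / 4 ^ n) := by
    rw [one_div, inv_pow]; ring
  rw [e, le_min_iff] at hn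
  have hp : 0 < 2 ^ ℓ * (ρ / 4 ^ n) := by positivity
  obtain ⟨E, e1, e2, e3, e4⟩ := St_iter ℓ hLLC hj h hw hCW hsm htb hex hδ n hρ h1 hball (by nlinarith)
  refine ⟨E, e1, e2, e3, fun a ha => (e4 a ha).trans ?_⟩
  gcongr
  exact (gg_mono (by rw [dist_self]; linarith)).trans (he x)

include hLLC hj h hw hCW hsm htb hex in
lemma pointwise {x y : X} (h1 : 2 * 2 ^ ℓ * dist x y ≤ rX)
    (hballx : closedBall x (2 ^ (6 + 2 * ℓ) * (dist x y / 4)) ⊆ j '' closedBall 0 1)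
    (hbally : closedBall y (2 ^ (6 + 2 * ℓ) * (dist x y / 4)) ⊆ j '' closedBall 0 1) :
    qmu μ 2 x y ≤ 216 * CW * (CD : ℝ≥0∞) ^ (17 + 5 * ℓ) * gg μ x (dist x y) := by
  have hL1 : (1 : ℝ) ≤ 2 ^ ℓ := one_le_pow₀ (by norm_num)
  have hCD1 : (1 : ℝ≥0∞) ≤ CD := h.one_le x
  refine qmu_le fun δ hδ => ?_
  by_cases hxy : x = y
  · rw [hxy, qDelta_self]; exact bot_le
  have hr : 0 < dist x y := dist_pos.2 hxy
  set r := dist x y with hrdef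
  refine ENNReal.le_of_forall_pos_le_add fun η hη _ => ?_
  have hη2 : (0 : ℝ≥0∞) < η / 2 := by simpa using hη.ne'
  obtain ⟨E, hE, hxE, ⟨b, hbE, hb⟩, hq⟩ := St_final (x := x) (ρ := r / 4) ℓ hLLC hj h hw hCW hsm htb hex hδ
    (by positivity) (by nlinarith) hballx hη2
  obtain ⟨F, hF, hyF, ⟨b', hb'F, hb'⟩, hq'⟩ := St_final (x := y) (ρ := r / 4) ℓ hLLC hj h hw hCW hsm htb hex hδ
    (by positivity) (by nlinarith) hbally hη2
  have hp2 : (2 : ℝ) ^ (3 + ℓ) = 8 * 2 ^ ℓ := by ring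
  obtain ⟨P, hP, ⟨p1, hp1P, hp1E⟩, ⟨p2, hp2P, hp2F⟩, hPq⟩ := loewner ℓ hLLC hj h hw hCW hsm htb
    (by positivity) hballx
    hE hF hxE hbE hyF hb'F hb hb' (Metric.mem_ball_self (by positivity))
    (by rw [Metric.mem_ball, dist_comm, ← hrdef, hp2]; nlinarith) hδ
  set A2 : ℝ≥0∞ := 24 * CW * (CD : ℝ≥0∞) ^ (14 + 5 * ℓ) with hA2
  have g1 : gg μ x (r / 4) ≤ gg μ x r := gg_mono (by rw [dist_self]; linarith)
  have g2 : gg μ y (r / 4) ≤ CD * gg μ x r := by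
    have := h.gg_pow 1 x hr
    rw [pow_one, pow_one] at this
    refine le_trans (gg_mono ?_) this
    rw [dist_comm, ← hrdef]; linarith
  calc qDelta μ 2 δ x y ≤ qDelta μ 2 δ x p1 + qDelta μ 2 δ p1 y := qDelta_triangle _ _ _ _
    _ ≤ qDelta μ 2 δ x p1 + (qDelta μ 2 δ p1 p2 + qDelta μ 2 δ p2 y) := by
        gcongr; exact qDelta_triangle _ _ _ _
    _ ≤ (η / 2 + 4 * (CD : ℝ≥0∞) ^ 2 * A2 * gg μ x (r / 4)) + (A2 * gg μ x (r / 4) +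
        (η / 2 + 4 * (CD : ℝ≥0∞) ^ 2 * A2 * gg μ y (r / 4))) := by
        refine add_le_add (hq p1 hp1E) (add_le_add (hPq _ hp1P _ hp2P) ?_)
        rw [qDelta_comm]; exact hq' p2 hp2F
    _ ≤ (η / 2 + 4 * (CD : ℝ≥0∞) ^ 2 * A2 * gg μ x r) + (A2 * gg μ x r +
        (η / 2 + 4 * (CD : ℝ≥0∞) ^ 2 * A2 * (CD * gg μ x r))) := by gcongr
    _ = (η / 2 + η / 2) + A2 * (4 * ((CD : ℝ≥0∞) ^ 2 * 1) + 1 * 1 * 1 + 4 * (CD : ℝ≥0∞) ^ 3) * gg μ x r := by ring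
    _ ≤ η + A2 * (4 * ((CD : ℝ≥0∞) ^ 2 * CD) + CD * CD * CD + 4 * (CD : ℝ≥0∞) ^ 3) * gg μ x r := by
        rw [ENNReal.add_halves]; gcongr
    _ = _ := by rw [hA2]; ring

include hLLC hj h hw hCW hsm htb hex in
lemma local_bound (hrX : 0 < rX) : ∃ r₀ > 0, ∀ z y : X, dist z (j 0) < r₀ → dist z y < r₀ →
    qmu μ 2 z y ≤ 216 * CW * (CD : ℝ≥0∞) ^ (17 + 5 * ℓ) * gg μ z (dist z y) := by
  have hK : j '' closedBall 0 1 ∈ 𝓝 (j 0) :=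
    hj.isOpenMap.image_mem_nhds (Metric.closedBall_mem_nhds 0 one_pos)
  obtain ⟨R, hR, hRs⟩ := Metric.nhds_basis_closedBall.mem_iff.1 hK
  set C : ℝ := 2 ^ (6 + 2 * ℓ) with hC
  have hC1 : 1 ≤ C := one_le_pow₀ (by norm_num)
  refine ⟨min (R / (4 * C)) (rX / (2 * 2 ^ ℓ)), by positivity, fun z y hz hy => ?_⟩
  have h2 : dist z (j 0) * (4 * C) < R := (lt_div_iff₀ (by positivity)).1 (hz.trans_le (min_le_left _ _))
  have h3 : dist z y * (4 * C) < R := (lt_div_iff₀ (by positivity)).1 (hy.trans_le (min_le_left _ _))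
  have h4 : dist z y * (2 * 2 ^ ℓ) < rX := (lt_div_iff₀ (by positivity)).1 (hy.trans_le (min_le_right _ _))
  have h5 := dist_nonneg (x := z) (y := j 0)
  have h6 := dist_nonneg (x := z) (y := y)
  have h7 : 4 * dist z (j 0) ≤ dist z (j 0) * (4 * C) := by nlinarith
  have h8 : 4 * dist z y ≤ dist z y * (4 * C) := by nlinarith
  refine pointwise ℓ hLLC hj h hw hCW hsm htb hex (by linarith) ?_ ?_
  · refine (Metric.closedBall_subset_closedBall' ?_).trans hRs
    linarith
  · refine (Metric.closedBall_subset_closedBall' ?_).trans hRs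
    have := dist_triangle_left y (j 0) z
    linarith

end pw
end

section


lemma exists_chart {X : Type*} [TopologicalSpace X] {Ω : Set ↥Sphere2} (hΩ : IsOpen Ω)
    (f : X ≃ₜ ↥Ω) (x₀ : X) : ∃ j : E2 → X, IsOpenEmbedding j ∧ j 0 = x₀ := by
  haveI : Fact (Module.finrank ℝ (EuclideanSpace ℝ (Fin 3)) = 2 + 1) := ⟨by simp⟩
  let p : ↥Sphere2 := (f x₀ : ↥Sphere2)
  let φ : OpenPartialHomeomorph ↥Sphere2 E2 := chartAt (EuclideanSpace ℝ (Fin 2)) p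
  have hp : p ∈ φ.source := mem_chart_source _ p
  have hW : IsOpen (φ.target ∩ φ.symm ⁻¹' Ω) := φ.symm.isOpen_inter_preimage hΩ
  have hpW : φ p ∈ φ.target ∩ φ.symm ⁻¹' Ω :=
    ⟨φ.map_source hp, by rw [mem_preimage, φ.left_inv hp]; exact (f x₀).2⟩
  obtain ⟨r, hr, hrW⟩ := Metric.isOpen_iff.1 hW _ hpW
  let u : OpenPartialHomeomorph E2 E2 := OpenPartialHomeomorph.univBall (φ p) r
  have hut : u.target = Metric.ball (φ p) r := OpenPartialHomeomorph.univBall_target _ hr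
  have hus : u.source = univ := OpenPartialHomeomorph.univBall_source _ _
  let j0 := u.trans φ.symm
  have hmem : ∀ v, u v ∈ φ.target ∩ φ.symm ⁻¹' Ω := fun v => hrW (by
    rw [← hut]; exact u.map_source (by rw [hus]; trivial))
  have hj0s : j0.source = univ := by
    rw [OpenPartialHomeomorph.trans_source, hus, univ_inter, eq_univ_iff_forall]
    exact fun v => (hmem v).1
  have hj0 : IsOpenEmbedding j0 := j0.to_isOpenEmbedding hj0s
  let j1 : E2 → ↥Ω := fun v => ⟨j0 v, (hmem v).2⟩
  have hj1 : IsOpenEmbedding j1 := IsOpenEmbedding.of_comp j1 hΩ.isOpenEmbedding_subtypeVal hj0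
  refine ⟨f.symm ∘ j1, f.symm.isOpenEmbedding.comp hj1, ?_⟩
  have : j1 0 = f x₀ := by
    apply Subtype.ext
    change φ.symm (u 0) = p
    rw [show u 0 = φ p from OpenPartialHomeomorph.univBall_apply_zero _ _, φ.left_inv hp]
  simp [this]

lemma IsLLC.mono {X : Type*} [MetricSpace X] {a b : ℝ} (ha : 1 ≤ a) (hab : a ≤ b)
    (h : IsLLC X a) : IsLLC X b := by
  intro x r hr
  obtain ⟨h1, h2⟩ := h x r hr
  refine ⟨fun y hy z hz => ?_, fun y z hy hz => ?_⟩
  · obtain ⟨K, hK, hs, hh⟩ := h1 y hy z hz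
    exact ⟨K, hK, hs.trans (Metric.ball_subset_ball (by gcongr)), hh⟩
  · obtain ⟨K, hK, hs, hh⟩ := h2 y z hy hz
    refine ⟨K, hK, hs.trans (compl_subset_compl.2 (Metric.ball_subset_ball ?_)), hh⟩
    exact div_le_div_of_nonneg_left hr.le (by linarith) hab

lemma le_two_pow_ell {lam : ℝ} (h : 1 ≤ lam) : lam ≤ 2 ^ ellOf lam := by
  have h1 : Real.logb 2 lam ≤ (ellOf lam : ℝ) := by
    refine (Int.le_ceil _).trans ?_
    unfold ellOf
    exact_mod_cast Int.self_le_toNat _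
  have := (Real.logb_le_iff_le_rpow (by norm_num) (by linarith)).1 h1
  rwa [Real.rpow_natCast] at this

lemma exists_radius {X : Type*} [MetricSpace X] [PreconnectedSpace X] {a b : X} (hab : a ≠ b) :
    ∀ z : X, ∀ s, 0 < s → s ≤ dist a b / 2 → ∃ y, dist z y = s := by
  intro z s hs hsr
  have h1 : ∃ c, s ≤ dist z c := by
    by_contra hcon
    push Not at hcon
    have := dist_triangle_left a b z
    linarith [hcon a, hcon b]
  obtain ⟨c, hc⟩ := h1
  have := intermediate_value_univ z c (f := fun y => dist z y) (by fun_prop)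
  obtain ⟨y, hy⟩ := this ⟨by simpa using hs.le, hc⟩
  exact ⟨y, hy⟩

lemma haus_piece {X : Type*} [MetricSpace X] [MeasurableSpace X] [BorelSpace X] {μ : Measure X}
    {CD : ℝ≥0} (h : IsDoublingWith μ CD)
    (hsm : ∀ η : ℝ≥0∞, 0 < η → ∃ ε > 0, ∀ z : X, gg μ z ε ≤ η)
    (htb : TotallyBounded (univ : Set X)) {Y : Type*} [MetricSpace Y] [MeasurableSpace Y] [BorelSpace Y]
    (e : X → Y) (hq : ∀ x y : X, edist (e x) (e y) = qmu μ 2 x y) {B : Set X} {A1 : ℝ≥0∞}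
    (hA1 : A1 ≠ ⊤) {r₁ : ℝ} (hr₁ : 0 < r₁)
    (hB : ∀ z ∈ B, ∀ y, dist z y < r₁ → qmu μ 2 z y ≤ A1 * gg μ z (dist z y))
    {x : X} {R R' : ℝ} (hRR : R < R') (hBR : B ⊆ closedBall x R) :
    μH[2] (e '' B) ≤ 4 * A1 ^ 2 * CD * μ (Metric.ball x R') := by
  choose ε₀ hε₀ hg using fun m : ℕ => hsm (((m : ℝ≥0∞) + 1)⁻¹) (by simp)
  let ε : ℕ → ℝ := fun m => min (ε₀ m) (min r₁ (R' - R))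
  have hε : ∀ m, 0 < ε m := fun m => lt_min (hε₀ m) (lt_min hr₁ (by linarith))
  choose N hNfin hNsub hNsep hNcov using fun m => exists_net B (htb.subset (subset_univ _)) (hε m)
  haveI : ∀ m, Fintype (N m) := fun m => (hNfin m).fintype
  have hdiam : ∀ m (i : N m), ediam (e '' Metric.ball (i : X) (ε m)) ≤ 2 * A1 * gg μ (i : X) (ε m) := by
    intro m i
    refine ediam_le ?_
    rintro _ ⟨y, hy, rfl⟩ _ ⟨y', hy', rfl⟩
    have aux : ∀ y ∈ Metric.ball (i : X) (ε m), edist (e i) (e y) ≤ A1 * gg μ (i : X) (ε m) := by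
      intro y hy
      rw [Metric.mem_ball, dist_comm] at hy
      rw [hq]
      refine (hB i (hNsub m i.2) y (hy.trans_le ((min_le_right _ _).trans (min_le_left _ _)))).trans ?_
      gcongr
      exact gg_mono (by rw [dist_self]; linarith)
    calc edist (e y) (e y') ≤ edist (e i) (e y) + edist (e i) (e y') := edist_triangle_left _ _ _
      _ ≤ A1 * gg μ (i : X) (ε m) + A1 * gg μ (i : X) (ε m) := add_le_add (aux y hy) (aux y' hy')
      _ = _ := by ring
  have hr0 : Tendsto (fun m : ℕ => 2 * A1 * ((m : ℝ≥0∞) + 1)⁻¹) atTop (𝓝 0) := by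
    have h1 : Tendsto (fun m : ℕ => ((m : ℝ≥0∞) + 1)⁻¹) atTop (𝓝 0) := by
      have := (tendsto_add_atTop_iff_nat 1).2 ENNReal.tendsto_inv_nat_nhds_zero
      simpa using this
    simpa using ENNReal.Tendsto.const_mul h1 (a := 2 * A1) (Or.inr (ENNReal.mul_ne_top (by simp) hA1))
  refine (Measure.hausdorffMeasure_le_liminf_sum (ι := fun m => N m) 2 (e '' B) (l := atTop)
    (fun m : ℕ => 2 * A1 * ((m : ℝ≥0∞) + 1)⁻¹) hr0 (fun m i => e '' Metric.ball (i : X) (ε m)) ?_ ?_).trans ?_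
  · refine Eventually.of_forall fun m i => (hdiam m i).trans ?_
    gcongr
    exact (gg_mono (by rw [dist_self]; simp [ε])).trans (hg m i)
  · refine Eventually.of_forall fun m => ?_
    rintro _ ⟨y, hy, rfl⟩
    obtain ⟨z, hz, hyz⟩ := hNcov m y hy
    exact mem_iUnion.2 ⟨⟨z, hz⟩, mem_image_of_mem _ hyz⟩
  · refine le_trans (liminf_le_liminf (v := fun _ => 4 * A1 ^ 2 * CD * μ (Metric.ball x R'))
      (Eventually.of_forall fun m => ?_)) (by simp)
    calc ∑ i : N m, ediam (e '' Metric.ball (i : X) (ε m)) ^ (2 : ℝ)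
        ≤ ∑ i : N m, 4 * A1 ^ 2 * CD * μ (Metric.ball (i : X) (ε m / 2)) := by
          refine Finset.sum_le_sum fun i _ => ?_
          rw [ENNReal.rpow_two]
          calc ediam (e '' Metric.ball (i : X) (ε m)) ^ 2 ≤ (2 * A1 * gg μ (i : X) (ε m)) ^ 2 := by
                gcongr; exact hdiam m i
            _ = 4 * A1 ^ 2 * μ (Metric.ball (i : X) (ε m)) := by
                rw [mul_pow, mul_pow, gg_sq]; norm_num
            _ ≤ 4 * A1 ^ 2 * (CD * μ (Metric.ball (i : X) (ε m / 2))) := by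
                gcongr
                have := h.2 (i : X) (ε m / 2) (half_pos (hε m))
                rwa [mul_div_cancel₀ _ (by norm_num)] at this
            _ = _ := by ring
      _ = 4 * A1 ^ 2 * CD * ∑ i : N m, μ (Metric.ball (i : X) (ε m / 2)) := by rw [Finset.mul_sum]
      _ ≤ _ := by
          gcongr
          rw [← tsum_fintype (L := .unconditional _), ← measure_iUnion ?_ fun i => measurableSet_ball]
          · refine measure_mono (iUnion_subset fun i => Metric.ball_subset_ball' ?_)
            have hx := hBR (hNsub m i.2)
            rw [mem_closedBall] at hx
            have : ε m ≤ R' - R := (min_le_right _ _).trans (min_le_right _ _)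
            linarith [hε m]
          · intro i k hik
            refine Metric.ball_disjoint_ball ?_
            have := hNsep m i i.2 k k.2 (fun hh => hik (Subtype.ext hh))
            linarith

lemma haus_total {X : Type*} [MetricSpace X] [MeasurableSpace X] [BorelSpace X] {μ : Measure X}
    {CD CW : ℝ≥0} (h : IsDoublingWith μ CD) (hw : IsWMDM μ 2 CW)
    (hsm : ∀ η : ℝ≥0∞, 0 < η → ∃ ε > 0, ∀ z : X, gg μ z ε ≤ η)
    (htb : TotallyBounded (univ : Set X)) {Y : Type*} [MetricSpace Y] [MeasurableSpace Y] [BorelSpace Y]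
    (e : X → Y) (hq : ∀ x y : X, edist (e x) (e y) = qmu μ 2 x y) {A1 : ℝ≥0∞}
    (hA1 : A1 ≠ ⊤)
    (hloc : ∀ z : X, ∃ r > 0, ∀ y, dist z y < r → qmu μ 2 z y ≤ A1 * gg μ z (dist z y))
    (x : X) (s : ℝ≥0∞) :
    μH[2] (e '' {y | qmu μ 2 x y < s}) ≤ 4 * A1 ^ 2 * CD ^ 2 * CW ^ 2 * s ^ 2 := by
  set A : Set X := {y | qmu μ 2 x y < s} with hA
  by_cases htriv : A ⊆ {x}
  · have : e '' A ⊆ {e x} := by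
      rintro _ ⟨y, hy, rfl⟩
      rw [htriv hy]; rfl
    refine (measure_mono this).trans ?_
    haveI := Measure.noAtoms_hausdorff Y (d := 2) (by norm_num)
    rw [measure_singleton]; exact bot_le
  obtain ⟨y1, hy1, hne⟩ := not_subset.1 htriv
  have hy1x : 0 < dist x y1 := dist_pos.2 fun hh => hne hh.symm
  have hbdd : BddAbove ((fun y => dist x y) '' A) := by
    obtain ⟨C, hC⟩ := (Metric.isBounded_iff.1 htb.isBounded)
    refine ⟨C, ?_⟩
    rintro _ ⟨y, -, rfl⟩
    exact hC (mem_univ _) (mem_univ _)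
  set R := sSup ((fun y => dist x y) '' A) with hR
  have hRpos : 0 < R := hy1x.trans_le (le_csSup hbdd ⟨y1, hy1, rfl⟩)
  obtain ⟨_, ⟨y, hy, rfl⟩, hyR⟩ := exists_lt_of_lt_csSup (b := 2 * R / 3) (s := (fun y => dist x y) '' A)
    ⟨_, y1, hy1, rfl⟩ (by rw [← hR]; linarith)
  simp only at hyR
  have hdpos : 0 < dist x y := by linarith
  have hAR : A ⊆ closedBall x R := fun z hz => by
    rw [mem_closedBall, dist_comm]; exact le_csSup hbdd ⟨z, hz, rfl⟩
  have hmeas : μ (Metric.ball x (2 * dist x y)) ≤ CD * (CW ^ 2 * s ^ 2) := by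
    refine (h.2 x _ hdpos).trans ?_
    gcongr
    rw [← gg_sq, ← mul_pow]
    gcongr
    calc gg μ x (dist x y) ≤ μ (pairBall x y) ^ (1 / 2 : ℝ) := by
          unfold gg; gcongr; exact subset_union_left
      _ ≤ CW * qmu μ 2 x y := hw x y
      _ ≤ CW * s := by gcongr; exact hy.le
  let Xn : ℕ → Set X := fun n => {z | ∀ y, dist z y < 1 / ((n : ℝ) + 1) →
    qmu μ 2 z y ≤ A1 * gg μ z (dist z y)}
  have hmono : Monotone fun n => e '' (A ∩ Xn n) := by
    intro n m hnm
    refine image_mono (inter_subset_inter_right _ ?_)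
    intro z hz y hy
    exact hz y (hy.trans_le (one_div_le_one_div_of_le (by positivity) (by gcongr)))
  have hcov : e '' A ⊆ ⋃ n, e '' (A ∩ Xn n) := by
    rintro _ ⟨z, hz, rfl⟩
    obtain ⟨r, hr, hzr⟩ := hloc z
    obtain ⟨n, hn⟩ := exists_nat_one_div_lt hr
    exact mem_iUnion.2 ⟨n, z, ⟨hz, fun y hy => hzr y (hy.trans hn)⟩, rfl⟩
  refine (measure_mono hcov).trans ?_
  rw [hmono.measure_iUnion]
  refine iSup_le fun n => ?_
  refine (haus_piece h hsm htb e hq hA1 (r₁ := 1 / ((n : ℝ) + 1)) (by positivity)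
    (fun z hz => hz.2) (x := x) (R := R) (R' := 2 * dist x y) (by linarith)
    (inter_subset_left.trans hAR)).trans ?_
  calc 4 * A1 ^ 2 * CD * μ (Metric.ball x (2 * dist x y))
      ≤ 4 * A1 ^ 2 * CD * (CD * (CW ^ 2 * s ^ 2)) := by gcongr
    _ = _ := by ring

theorem statement7
    {X : Type*} [MetricSpace X] [MeasurableSpace X] [BorelSpace X]
    (lam : ℝ) (CD CW : ℝ≥0) (M : ℕ) (μ : Measure X)
    (hlam : 1 ≤ lam) (hLLC : IsLLC X lam)
    (hhom : ∃ Ω₀ : Set ↥Sphere2, IsCircleDomainS2 Ω₀ ∧ Nonempty (X ≃ₜ ↥Ω₀))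
    (hcpt : CompactSpace (Completion X))
    (hfin : (residComps X).Finite) (hM : (residComps X).ncard = M)
    (hreg : μ.Regular) (hdbl : IsDoublingWith μ CD) (hw : IsWMDM μ 2 CW)
    {Y : Type*} [MetricSpace Y] (e : X ≃ Y)
    (hq : ∀ x y : X, edist (e x) (e y) = qmu μ 2 x y) :
    ∀ (x : X) (s : ℝ≥0), 0 < s →
      hausdorff2 Y ((fun p => e p) '' {y | qmu μ 2 x y < (s : ℝ≥0∞)}) ≤
        ENNReal.ofReal (2 * Real.pi) * CSconst lam CD CW ^ 2 * (CD : ℝ≥0∞) ^ 4 *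
          (CW : ℝ≥0∞) ^ 2 * (s : ℝ≥0∞) ^ 2 := by
  intro x s _
  obtain ⟨Ω, ⟨hΩo, hΩc, -⟩, ⟨f⟩⟩ := hhom
  set ℓ := ellOf lam with hℓ
  have hL : IsLLC X (2 ^ ℓ) := hLLC.mono hlam (le_two_pow_ell hlam)
  have htb : TotallyBounded (univ : Set X) := by
    have := totallyBounded_preimage (Completion.isUniformInducing_coe X)
      (isCompact_univ (X := Completion X)).totallyBounded
    simpa using this
  haveI : ConnectedSpace ↥Ω := isConnected_iff_connectedSpace.1 hΩc
  haveI : PreconnectedSpace X := ⟨by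
    have := (isPreconnected_univ (α := ↥Ω)).image f.symm f.symm.continuous.continuousOn
    simpa [f.symm.surjective.range_eq] using this⟩
  obtain ⟨j₀, hj₀, hj₀x⟩ := exists_chart hΩo f x
  obtain ⟨v, hv⟩ := exists_ne (0 : E2)
  have hne : x ≠ j₀ v := by rw [← hj₀x]; exact fun hh => hv (hj₀.injective hh).symm
  set rX := dist x (j₀ v) / 2 with hrXdef
  have hrX : 0 < rX := half_pos (dist_pos.2 hne)
  have hex := exists_radius hne
  have hμ : μ univ < ⊤ := by
    obtain ⟨C, hC⟩ := (Metric.isBounded_iff.1 htb.isBounded)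
    have hC0 : 0 ≤ C := dist_nonneg.trans (hC (mem_univ x) (mem_univ x))
    refine (measure_mono ?_).trans_lt (hdbl.1 x (C + 1) (by linarith)).2
    intro y _
    rw [Metric.mem_ball]
    linarith [hC (mem_univ y) (mem_univ x)]
  have hsm : ∀ η : ℝ≥0∞, 0 < η → ∃ ε > 0, ∀ z : X, gg μ z ε ≤ η := fun η hη =>
    small_gg hdbl hrX hex hμ hη
  have hCW : CW ≠ 0 := by
    rintro rfl
    have h1 := hw x (j₀ v)
    rw [ENNReal.coe_zero, zero_mul] at h1
    have h2 := (hdbl.gg_pos x (dist_pos.2 hne)).1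
    have h3 : gg μ x (dist x (j₀ v)) ≤ μ (pairBall x (j₀ v)) ^ (1 / 2 : ℝ) := by
      unfold gg; gcongr; exact subset_union_left
    exact absurd (h3.trans h1) (not_le.2 h2)
  set A1 : ℝ≥0∞ := 216 * CW * (CD : ℝ≥0∞) ^ (17 + 5 * ℓ) with hA1
  have hA1top : A1 ≠ ⊤ := by
    rw [hA1]; exact ENNReal.mul_ne_top (by simp [ENNReal.mul_eq_top]) (by simp)
  have hloc : ∀ z : X, ∃ r > 0, ∀ y, dist z y < r → qmu μ 2 z y ≤ A1 * gg μ z (dist z y) := by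
    intro z
    obtain ⟨j, hj, hjz⟩ := exists_chart hΩo f z
    obtain ⟨r, hr, hb⟩ := local_bound ℓ hL hj hdbl hw hCW hsm htb hex hrX
    exact ⟨r, hr, fun y hy => hb z y (by rw [hjz, dist_self]; exact hr) hy⟩
  letI : MeasurableSpace Y := borel Y
  haveI : BorelSpace Y := borelSpaceBorel Y
  have main := haus_total hdbl hw hsm htb (fun p => e p) hq hA1top hloc x (s : ℝ≥0∞)
  have hCD1 : (1 : ℝ≥0∞) ≤ CD := hdbl.one_le x
  have hA1le : A1 ≤ CSconst lam CD CW * CD := by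
    unfold CSconst
    rw [← hℓ, hA1]
    calc 216 * CW * (CD : ℝ≥0∞) ^ (17 + 5 * ℓ)
        ≤ (16 * (CD : ℝ≥0∞) ^ 12) * CW * (CD : ℝ≥0∞) ^ (17 + 5 * ℓ) := by
          gcongr; exact CD_big hdbl hrX hex x
      _ = 16 * CW * (CD : ℝ≥0∞) ^ (29 + 5 * ℓ) := by ring
      _ ≤ 16 * CW * (CD : ℝ≥0∞) ^ (29 + 16 * ℓ) := by
          gcongr
          norm_num
      _ = _ := by ring
  have e0 : hausdorff2 Y ((fun p => e p) '' {y | qmu μ 2 x y < (s : ℝ≥0∞)}) =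
      ENNReal.ofReal (Real.pi / 4) * μH[2] ((fun p => e p) '' {y | qmu μ 2 x y < (s : ℝ≥0∞)}) := rfl
  rw [e0]
  calc _ ≤ ENNReal.ofReal (Real.pi / 4) * (4 * A1 ^ 2 * CD ^ 2 * CW ^ 2 * s ^ 2) := by gcongr
    _ ≤ ENNReal.ofReal (Real.pi / 4) * (4 * (CSconst lam CD CW * CD) ^ 2 * CD ^ 2 * CW ^ 2 * s ^ 2) := by
        gcongr
    _ = (ENNReal.ofReal (Real.pi / 4) * 4) * CSconst lam CD CW ^ 2 * (CD : ℝ≥0∞) ^ 4 *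
          (CW : ℝ≥0∞) ^ 2 * (s : ℝ≥0∞) ^ 2 := by ring
    _ ≤ _ := by
        gcongr
        rw [← ENNReal.ofReal_ofNat 4, ← ENNReal.ofReal_mul (by positivity)]
        refine ENNReal.ofReal_le_ofReal ?_
        linarith [Real.pi_pos]

end

end
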